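/- Short-time C³ control for the inviscid Burgers equation (main part of Lemma on local solvability for the splitting scheme): There exists an absolute constant c > 0 such that the following holds. Let θ₀ : ℝ → ℝ be a smooth periodic function with ‖θ₀‖_{C³} ≤ N, and suppose w : ℝ × [0,h] → ℝ is a classical C³ (in x) solution of ∂_t w = w ∂_x w with w(·,0) = θ₀, where h ≤ c/N. Then ‖w(·,t)‖_{C³} ≤ 2N for all 0 ≤ t ≤ h. Consequently, if Φ_t is the fractional heat kernel (Φ_t(x) = t^{−1/(2α)}Φ(t^{−1/(2α)}x) with Φ(x) = (1/2π)∫_ℝ exp(ixξ − |ξ|^{2α})dξ, 0 < α < 1), then v(·,t) = Φ_t ∗ w(·,h) also satisfies ‖v(·,t)‖_{C³} ≤ 2N for 0 ≤ t ≤ h. -/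

import Mathlib

open Set MeasureTheory Filter Topology

noncomputable section

/-- The fractional heat kernel profile `Φ(x) = (1/2π)∫_ℝ exp(ixξ − |ξ|^{2α}) dξ`. -/
def fracHeatKernel (α x : ℝ) : ℝ :=
  (1 / (2 * Real.pi)) *
    (∫ s : ℝ, Complex.exp (((x * s : ℝ) : ℂ) * Complex.I - ((|s| ^ (2*α) : ℝ) : ℂ))).re

/-- The rescaled fractional heat kernel `Φ_t(x) = t^{−1/(2α)} Φ(t^{−1/(2α)} x)`. -/
def fracHeatKernelT (α t x : ℝ) : ℝ :=
  t ^ (-(1 / (2*α))) * fracHeatKernel α (t ^ (-(1 / (2*α))) * x)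

/-!
The characteristic through `(x, t)` has its foot at `ξ = x + t * w x t`, and `w x t = w ξ 0`.
Differentiating this identity three times, with the stretch factor `∂ξ/∂x = (1 - t θ₀'(ξ))⁻¹` at
most `11/10` when `t N ≤ 1/11`, bounds the derivatives of `w(·, t)` by `2N`.

The work is in the identity itself, since `w` is only assumed separately differentiable. Where `w`
is jointly continuous, it follows from a maximum principle. If joint continuity failed somewhere,
Baire's theorem on the closed set of bad points would give one near which `w` is Lipschitz in space,
uniformly over the bad times. Characteristics issuing from bad times carry such a bound to the good
times in between, and a uniform Lipschitz bound in space forces joint continuity, a contradiction.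

The function `exp (-|ξ|^(2α))` is a limit of exponentials of mixtures of Gaussians, so its Fourier
transform is nonnegative. Hence the kernel `Φ_t` is nonnegative of mass at most `1`, and convolution
with it does not increase sup norms of derivatives.
-/

/-- A solution of the Burgers equation `∂_t w = w ∂_x w` for the times in `I`: at each of these
times `w` is `C¹` in `x`, and the equation holds pointwise. No joint regularity in `(x, t)` is
assumed. -/
structure IsBurgersSolution (w : ℝ → ℝ → ℝ) (I : Set ℝ) : Prop where
  contDiff : ∀ t ∈ I, ContDiff ℝ 1 (fun x => w x t)
  hasDerivWithinAt : ∀ x, ∀ t ∈ I,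
    HasDerivWithinAt (fun s => w x s) (w x t * deriv (fun x' => w x' t) x) I t

section MaximumPrinciple

variable {a b s t : ℝ} {w H : ℝ → ℝ → ℝ}

lemma deriv_eq_zero_and_nonneg_of_isMaxOn_rectangle {z τ p q : ℝ} (hz : z ∈ Ioo a b)
    (hτ : τ ∈ Ioc s t) (hmax : IsMaxOn (Function.uncurry H) (Icc a b ×ˢ Icc s t) (z, τ))
    (hp : HasDerivAt (fun z' => H z' τ) p z)
    (hq : HasDerivWithinAt (fun τ' => H z τ') q (Icc s t) τ) : p = 0 ∧ 0 ≤ q := by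
  have hτ' : τ ∈ Icc s t := Ioc_subset_Icc_self hτ
  constructor
  · refine IsLocalMax.hasDerivAt_eq_zero ?_ hp
    filter_upwards [Icc_mem_nhds hz.1 hz.2] with z' hz'
    exact hmax (show (z', τ) ∈ _ from ⟨hz', hτ'⟩)
  · have hmaxτ : IsMaxOn (fun τ' => H z τ') (Icc s t) τ := fun τ' h =>
      hmax (show (z, τ') ∈ _ from ⟨Ioo_subset_Icc_self hz, h⟩)
    have hcone : s - τ ∈ posTangentConeAt (Icc s t) τ :=
      sub_mem_posTangentConeAt_of_segment_subset
        ((convex_Icc s t).segment_subset hτ' ⟨le_rfl, hτ.1.le.trans hτ.2⟩)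
    have hle := hmaxτ.localize.hasFDerivWithinAt_nonpos hq.hasFDerivWithinAt hcone
    simp only [ContinuousLinearMap.toSpanSingleton_apply, smul_eq_mul] at hle
    nlinarith [hτ.1]

lemma nonpos_of_transport_of_nonpos_on_boundary
    (hH : ContinuousOn (Function.uncurry H) (Icc a b ×ˢ Icc s t))
    (htransport : ∀ z ∈ Ioo a b, ∀ τ ∈ Ioc s t, ∃ p, HasDerivAt (fun z' => H z' τ) p z ∧
      HasDerivWithinAt (fun τ' => H z τ') (w z τ * p) (Icc s t) τ)
    (hbot : ∀ z ∈ Icc a b, H z s ≤ 0) (hleft : ∀ τ ∈ Icc s t, H a τ ≤ 0)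
    (hright : ∀ τ ∈ Icc s t, H b τ ≤ 0) {x r : ℝ} (hx : x ∈ Icc a b) (hr : r ∈ Icc s t) :
    H x r ≤ 0 := by
  suffices hε : ∀ ε > 0, H x r - ε * (r - s) ≤ 0 by
    refine ge_of_tendsto (x := 𝓝[>] (0 : ℝ)) (f := fun ε => ε * (r - s)) ?_ ?_
    · simpa using ((by fun_prop : Continuous fun ε : ℝ => ε * (r - s)).tendsto 0).mono_left
        nhdsWithin_le_nhds
    · filter_upwards [self_mem_nhdsWithin] with ε h
      linarith [hε ε h]
  intro ε hε
  -- After subtracting `ε (τ - s)`, a positive maximum would have negative time derivative.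
  set K : ℝ → ℝ → ℝ := fun z τ => H z τ - ε * (τ - s)
  have hKc : ContinuousOn (Function.uncurry K) (Icc a b ×ˢ Icc s t) :=
    hH.sub (f := Function.uncurry H) (g := fun q : ℝ × ℝ => ε * (q.2 - s)) (by fun_prop)
  obtain ⟨⟨z, τ⟩, ⟨hz, hτ⟩, hmax⟩ :=
    (isCompact_Icc.prod isCompact_Icc).exists_isMaxOn ⟨(x, r), hx, hr⟩ hKc
  have hle : K x r ≤ K z τ := hmax (show (x, r) ∈ _ from ⟨hx, hr⟩)
  by_contra! hpos
  have hHpos : 0 < H z τ := by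
    have : 0 ≤ ε * (τ - s) := mul_nonneg hε.le (sub_nonneg.2 hτ.1)
    linarith
  have hz' : z ∈ Ioo a b :=
    ⟨hz.1.lt_of_ne (by rintro rfl; exact (hleft τ hτ).not_gt hHpos),
      hz.2.lt_of_ne (by rintro rfl; exact (hright τ hτ).not_gt hHpos)⟩
  have hτ' : τ ∈ Ioc s t :=
    ⟨hτ.1.lt_of_ne (by rintro rfl; exact (hbot z hz).not_gt hHpos), hτ.2⟩
  obtain ⟨p, hp, hq⟩ := htransport z hz' τ hτ'
  have hlin : HasDerivWithinAt (fun τ' => ε * (τ' - s)) ε (Icc s t) τ := by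
    simpa using ((hasDerivWithinAt_id τ _).sub_const s).const_mul ε
  obtain ⟨rfl, hnonneg⟩ := deriv_eq_zero_and_nonneg_of_isMaxOn_rectangle hz' hτ' hmax
    (hp.sub_const _) (hq.sub hlin)
  linarith

end MaximumPrinciple

namespace IsBurgersSolution

variable {w : ℝ → ℝ → ℝ} {I J : Set ℝ}

lemma mono (hw : IsBurgersSolution w I) (h : J ⊆ I) : IsBurgersSolution w J :=
  ⟨fun t ht => hw.contDiff t (h ht), fun x t ht => (hw.hasDerivWithinAt x t (h ht)).mono h⟩

lemma hasDerivAt_space (hw : IsBurgersSolution w I) {t : ℝ} (ht : t ∈ I) (x : ℝ) :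
    HasDerivAt (fun x' => w x' t) (deriv (fun x' => w x' t) x) x :=
  ((hw.contDiff t ht).differentiable one_ne_zero x).hasDerivAt

lemma continuousOn_time (hw : IsBurgersSolution w I) (x : ℝ) : ContinuousOn (fun s => w x s) I :=
  fun t ht => (hw.hasDerivWithinAt x t ht).continuousWithinAt

/-- The Burgers equation is invariant under `(x, t) ↦ (-x, -t)`. -/
lemma reverse (hw : IsBurgersSolution w I) : IsBurgersSolution (fun x t => w (-x) (-t)) (-I) where
  contDiff t ht := (hw.contDiff (-t) ht).comp contDiff_neg
  hasDerivWithinAt x t ht := by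
    refine ((hw.hasDerivWithinAt (-x) (-t) ht).comp t (hasDerivAt_neg t).hasDerivWithinAt
      fun _ hs => hs).congr_deriv ?_
    rw [deriv_comp_neg (f := fun x' => w x' (-t))]
    ring

/-- Both `z + (τ - s) w(z, τ)` and `w(z, τ)` solve `∂_τ H = w ∂_z H`, hence so does any function
of them. -/
lemma exists_hasDerivAt_transport (hw : IsBurgersSolution w I) {Ψ : ℝ × ℝ → ℝ}
    (hΨ : Differentiable ℝ Ψ) (s z : ℝ) {τ : ℝ} (hτ : τ ∈ I) :
    ∃ p, HasDerivAt (fun z' => Ψ (z' + (τ - s) * w z' τ, w z' τ)) p z ∧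
      HasDerivWithinAt (fun τ' => Ψ (z + (τ' - s) * w z τ', w z τ')) (w z τ * p) I τ := by
  have hwz := hw.hasDerivAt_space hτ z
  have hwτ := hw.hasDerivWithinAt z τ hτ
  set d := deriv (fun x' => w x' τ) z
  have hΨ' := (hΨ (z + (τ - s) * w z τ, w z τ)).hasFDerivAt
  refine ⟨_, hΨ'.comp_hasDerivAt z (((hasDerivAt_id z).add (hwz.const_mul (τ - s))).prodMk hwz),
    ?_⟩
  refine (hΨ'.comp_hasDerivWithinAt τ (((((hasDerivWithinAt_id τ I).sub_const s).mul
    hwτ).const_add z).prodMk hwτ)).congr_deriv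
      (Eq.trans ?_ ((fderiv ℝ Ψ _).map_smul (w z τ) (1 + (τ - s) * d, d)))
  rw [Prod.smul_mk]
  simp only [smul_eq_mul, id]
  congr 2
  ring

lemma continuousOn_reverse {S : Set (ℝ × ℝ)} (hc : ContinuousOn (Function.uncurry w) S) :
    ContinuousOn (Function.uncurry fun x t => w (-x) (-t)) (-S) :=
  hc.comp (f := fun q : ℝ × ℝ => -q) continuous_neg.continuousOn fun _ hq => hq

section Characteristics

variable {a b x s t : ℝ}

lemma abs_sub_mul_le {τ v r C : ℝ} (hτ : τ ∈ Icc s t) (hv : |v| ≤ C)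
    (hsmall : 4 * ((t - s) * C) ≤ r) : |(τ - s) * v| ≤ r / 4 := by
  rw [abs_mul, abs_of_nonneg (sub_nonneg.2 hτ.1)]
  have : (τ - s) * |v| ≤ (t - s) * C :=
    mul_le_mul (by linarith [hτ.2]) hv (abs_nonneg _) (by linarith [hτ.1, hτ.2])
  linarith

lemma sq_mul_sq_le_of_abs_le {p q r C : ℝ} (hr : 0 ≤ r) (hp : |p| ≤ 2 * C) (hq : r / 2 ≤ |q|) :
    r ^ 2 * p ^ 2 ≤ 16 * C ^ 2 * q ^ 2 := by
  have hp' := mul_le_mul_of_nonneg_left (pow_le_pow_left₀ (abs_nonneg p) hp 2) (sq_nonneg r)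
  have hq' := mul_le_mul_of_nonneg_left (pow_le_pow_left₀ (by positivity) hq 2)
    (sq_nonneg (4 * C))
  rw [sq_abs] at hp' hq'
  linarith

/-- The maximum principle is applied to `r² (w - w(ξ, s))² - 16 C² (ξ - y)²` with
`ξ = z + (τ - s) w(z, τ)`, whose value at `(x, t)`, where `ξ = y`, is `r² (w(x, t) - w(y, s))²`. -/
lemma eq_foot_of_bounded {r C : ℝ} (hw : IsBurgersSolution w (Icc s t)) (hst : s ≤ t) (hr : 0 < r)
    (hc : ContinuousOn (Function.uncurry w) (Icc (x - 2 * r) (x + 2 * r) ×ˢ Icc s t))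
    (hC : ∀ z ∈ Icc (x - 2 * r) (x + 2 * r), ∀ τ ∈ Icc s t, |w z τ| ≤ C)
    (hsmall : 4 * ((t - s) * C) ≤ r) :
    w (x + (t - s) * w x t) s = w x t := by
  have hsI : s ∈ Icc s t := left_mem_Icc.2 hst
  have htI : t ∈ Icc s t := right_mem_Icc.2 hst
  have hxI : x ∈ Icc (x - r) (x + r) := ⟨by linarith, by linarith⟩
  have hsub : Icc (x - r) (x + r) ⊆ Icc (x - 2 * r) (x + 2 * r) :=
    Icc_subset_Icc (by linarith) (by linarith)
  set y := x + (t - s) * w x t with hy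
  set Ψ : ℝ × ℝ → ℝ := fun q => r ^ 2 * (q.2 - w q.1 s) ^ 2 - 16 * C ^ 2 * (q.1 - y) ^ 2 with hΨ
  have hWd : Differentiable ℝ fun z => w z s := (hw.contDiff s hsI).differentiable one_ne_zero
  have hΨd : Differentiable ℝ Ψ := by
    have : Differentiable ℝ fun q : ℝ × ℝ => w q.1 s := hWd.comp differentiable_fst
    fun_prop
  have hside : ∀ z, |z - x| = r → ∀ τ ∈ Icc s t, Ψ (z + (τ - s) * w z τ, w z τ) ≤ 0 := by
    intro z hz τ hτ
    have hzI : z ∈ Icc (x - r) (x + r) := by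
      constructor <;> linarith [abs_le.1 hz.le]
    have hdz := abs_le.1 (abs_sub_mul_le hτ (hC z (hsub hzI) τ hτ) hsmall)
    have hdx := abs_le.1 (abs_sub_mul_le htI (hC x (hsub hxI) t htI) hsmall)
    have hfoot : |w (z + (τ - s) * w z τ) s| ≤ C :=
      hC _ ⟨by linarith [hzI.1], by linarith [hzI.2]⟩ s hsI
    have hval : |w z τ - w (z + (τ - s) * w z τ) s| ≤ 2 * C :=
      (abs_sub _ _).trans (by linarith [hC z (hsub hzI) τ hτ])
    have hdist : r / 2 ≤ |z + (τ - s) * w z τ - y| := by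
      rw [le_abs]
      rcases (abs_eq hr.le).1 hz with h | h
      · left; linarith
      · right; linarith
    exact sub_nonpos.2 (sq_mul_sq_le_of_abs_le hr.le hval hdist)
  have hcont : ContinuousOn (Function.uncurry fun z τ => Ψ (z + (τ - s) * w z τ, w z τ))
      (Icc (x - r) (x + r) ×ˢ Icc s t) := by
    have hc' := hc.mono (prod_mono hsub le_rfl)
    exact hΨd.continuous.comp_continuousOn (f := fun q : ℝ × ℝ =>
      (q.1 + (q.2 - s) * Function.uncurry w q, Function.uncurry w q)) (by fun_prop)
  have hmax : Ψ (x + (t - s) * w x t, w x t) ≤ 0 :=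
    nonpos_of_transport_of_nonpos_on_boundary (w := w) hcont
      (fun z _ τ hτ => hw.exists_hasDerivAt_transport hΨd s z (Ioc_subset_Icc_self hτ))
      (fun z _ => by
        simp only [hΨ, sub_self, zero_mul, add_zero]
        nlinarith [sq_nonneg (C * (z - y))])
      (hside _ (by simp [abs_of_pos hr])) (hside _ (by simp [abs_of_pos hr])) hxI htI
  have hsq : (w x t - w y s) ^ 2 ≤ 0 := by
    simp only [hΨ, ← hy, sub_self] at hmax
    exact nonpos_of_mul_nonpos_right (by linarith) (pow_pos hr 2)
  exact (sub_eq_zero.1 (pow_eq_zero_iff two_ne_zero |>.1 (hsq.antisymm (sq_nonneg _)))).symm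

lemma eventually_eq_foot (hw : IsBurgersSolution w (Icc s t)) (hst : s < t)
    (hc : ContinuousOn (Function.uncurry w) (Ioo a b ×ˢ Icc s t)) (hx : x ∈ Ioo a b) :
    ∀ᶠ k in 𝓝[>] 0, w (x + k * w x t) (t - k) = w x t := by
  obtain ⟨r, hr, hrab⟩ : ∃ r > 0, Icc (x - 2 * r) (x + 2 * r) ⊆ Ioo a b := by
    obtain ⟨ρ, hρ, h⟩ := Metric.nhds_basis_closedBall.mem_iff.1 (Ioo_mem_nhds hx.1 hx.2)
    rw [Real.closedBall_eq_Icc] at h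
    exact ⟨ρ / 2, by positivity, by rwa [mul_div_cancel₀ ρ two_ne_zero]⟩
  have hc' := hc.mono (prod_mono hrab le_rfl)
  obtain ⟨C, hC⟩ := (isCompact_Icc.prod isCompact_Icc).exists_bound_of_continuousOn hc'
  have hsmall : ∀ᶠ k in 𝓝[>] (0 : ℝ), 4 * (k * C) < r :=
    nhdsWithin_le_nhds ((by fun_prop : Continuous fun k : ℝ => 4 * (k * C)).continuousAt
      |>.eventually_lt_const (by simpa using hr))
  filter_upwards [hsmall, Ioo_mem_nhdsGT (sub_pos.2 hst)] with k hk hkI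
  have hsub : Icc (t - k) t ⊆ Icc s t := Icc_subset_Icc_left (by linarith [hkI.2])
  have := (hw.mono hsub).eq_foot_of_bounded (x := x) (r := r) (C := C) (by linarith [hkI.1]) hr
    (hc'.mono (prod_mono le_rfl hsub)) (fun z hz τ hτ => hC (z, τ) ⟨hz, hsub hτ⟩)
    (by rw [sub_sub_cancel]; exact hk.le)
  rwa [sub_sub_cancel] at this

lemma add_mul_mem_Ioo_of_mem_Icc {v u T : ℝ} (hx : x ∈ Ioo a b) (hy : x + T * v ∈ Ioo a b)
    (hu : u ∈ Icc 0 T) : x + u * v ∈ Ioo a b := by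
  rcases le_total 0 v with hv | hv
  · exact ⟨by nlinarith [hx.1, hu.1], by nlinarith [hy.2, hu.2]⟩
  · exact ⟨by nlinarith [hy.1, hu.2], by nlinarith [hx.2, hu.1]⟩

lemma eq_foot_of_continuousOn (hw : IsBurgersSolution w (Icc s t)) (hst : s ≤ t)
    (hc : ContinuousOn (Function.uncurry w) (Ioo a b ×ˢ Icc s t))
    (hx : x ∈ Ioo a b) (hy : x + (t - s) * w x t ∈ Ioo a b) :
    w (x + (t - s) * w x t) s = w x t := by
  set v := w x t with hv
  have hline : MapsTo (fun u => (x + u * v, t - u)) (Icc 0 (t - s)) (Ioo a b ×ˢ Icc s t) :=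
    fun u hu => ⟨add_mul_mem_Ioo_of_mem_Icc hx hy hu, by linarith [hu.2], by linarith [hu.1]⟩
  have hg : ContinuousOn (fun u => w (x + u * v) (t - u)) (Icc 0 (t - s)) :=
    hc.comp (f := fun u : ℝ => (x + u * v, t - u)) (by fun_prop) hline
  have hconst : Icc 0 (t - s) ⊆ {u | w (x + u * v) (t - u) = v} := by
    refine IsClosed.Icc_subset_of_forall_mem_nhdsWithin ?_ (by simp [hv]) ?_
    · rw [inter_comm]
      exact hg.preimage_isClosed_of_isClosed isClosed_Icc isClosed_singleton
    · rintro u ⟨hu, hu0, hut⟩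
      have hu : w (x + u * v) (t - u) = v := hu
      have hsub : Icc s (t - u) ⊆ Icc s t := Icc_subset_Icc_right (by linarith)
      have hev := (hw.mono hsub).eventually_eq_foot (by linarith) (hc.mono (prod_mono le_rfl hsub))
        (hline ⟨hu0, hut.le⟩).1
      have hshift : Tendsto (fun u' => u' - u) (𝓝[>] u) (𝓝[>] 0) := by
        refine tendsto_nhdsWithin_iff.2 ⟨?_, ?_⟩
        · simpa using ((continuous_sub_right u).tendsto u).mono_left nhdsWithin_le_nhds
        · filter_upwards [self_mem_nhdsWithin] with u' h using sub_pos.2 (mem_Ioi.1 h)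
      filter_upwards [hshift.eventually hev] with u' h
      rw [hu] at h
      show w (x + u' * v) (t - u') = v
      convert h using 2 <;> ring
  simpa using hconst (right_mem_Icc.2 (sub_nonneg.2 hst))

lemma eq_head_of_continuousOn (hw : IsBurgersSolution w (Icc s t)) (hst : s ≤ t)
    (hc : ContinuousOn (Function.uncurry w) (Ioo a b ×ˢ Icc s t))
    (hx : x ∈ Ioo a b) (hy : x - (t - s) * w x s ∈ Ioo a b) :
    w (x - (t - s) * w x s) t = w x s := by
  have hw' := hw.reverse
  have hc' := continuousOn_reverse hc
  rw [neg_Icc] at hw'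
  rw [neg_prod, neg_Icc, neg_Ioo] at hc'
  have := hw'.eq_foot_of_continuousOn (x := -x) (neg_le_neg hst) hc'
    ⟨neg_lt_neg hx.2, neg_lt_neg hx.1⟩ (by
      simp only [neg_neg]
      constructor <;> linarith [hy.1, hy.2])
  simp only [neg_neg] at this
  convert this using 2
  ring

end Characteristics
end IsBurgersSolution

namespace IsBurgersSolution

variable {w : ℝ → ℝ → ℝ} {a b x s t : ℝ}

/-- Two characteristics that crossed before time `t` would carry the same value, hence be
parallel. -/
lemma mul_sub_le_sq_of_continuousOn {p q : ℝ} (hw : IsBurgersSolution w (Icc s t)) (hst : s ≤ t)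
    (hc : ContinuousOn (Function.uncurry w) (Ioo a b ×ˢ Icc s t))
    (hp : p ∈ Ioo a b) (hq : q ∈ Ioo a b) (hq' : q - (t - s) * w q s ∈ Ioo a b) :
    (t - s) * (w p s - w q s) * (p - q) ≤ (p - q) ^ 2 := by
  by_contra! hlt
  have hΔ : w p s - w q s ≠ 0 := by
    intro h
    rw [h] at hlt
    nlinarith [sq_nonneg (p - q)]
  obtain ⟨u, hu⟩ : ∃ u, u * (w p s - w q s) = p - q := ⟨_, div_mul_cancel₀ _ hΔ⟩
  have hΔ2 : 0 < (w p s - w q s) ^ 2 := by positivity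
  have hu2 : u * u < (t - s) * u := by
    refine lt_of_mul_lt_mul_left ?_ hΔ2.le
    rw [← hu] at hlt
    linarith
  have hu0 : 0 < u := by
    by_contra! h
    nlinarith
  have hut : u < t - s := lt_of_mul_lt_mul_right hu2 hu0.le
  have hsub : Icc s (s + u) ⊆ Icc s t := Icc_subset_Icc_right (by linarith)
  have hmeet : q - u * w q s = p - u * w p s := by linarith
  have hm : q - u * w q s ∈ Ioo a b := by
    simpa [sub_eq_add_neg] using add_mul_mem_Ioo_of_mem_Icc (v := -w q s) (T := t - s) hq
      (by simpa [sub_eq_add_neg] using hq') ⟨hu0.le, hut.le⟩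
  have hhead : ∀ z ∈ Ioo a b, z - u * w z s ∈ Ioo a b → w (z - u * w z s) (s + u) = w z s := by
    intro z hz hz'
    have := (hw.mono hsub).eq_head_of_continuousOn (x := z) (by linarith)
      (hc.mono (prod_mono le_rfl hsub)) hz (by rwa [add_sub_cancel_left])
    rwa [add_sub_cancel_left] at this
  have hqm := hhead q hq hm
  have hpm := hhead p hp (hmeet ▸ hm)
  rw [hmeet] at hqm
  exact hΔ (sub_eq_zero.2 (hpm.symm.trans hqm))

/-- At the foot `y` of the characteristic, `(p - y)² - (t - s) (w(p, s) - w(x, t)) (p - y)` is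
nonnegative in `p` and vanishes at `p = y`, so its derivative `-(t - s) (w(y, s) - w(x, t))`
vanishes there. -/
lemma eq_foot_of_continuousOn_Ioc (hw : IsBurgersSolution w (Icc s t)) (hst : s ≤ t)
    (hc : ContinuousOn (Function.uncurry w) (Ioo a b ×ˢ Ioc s t))
    (hx : x ∈ Ioo a b) (hy : x + (t - s) * w x t ∈ Ioo a b) :
    w (x + (t - s) * w x t) s = w x t := by
  obtain rfl | hst := hst.eq_or_lt
  · simp
  set v := w x t
  set y := x + (t - s) * v
  have hnocross : ∀ p ∈ Ioo a b, (t - s) * (w p s - v) * (p - y) ≤ (p - y) ^ 2 := by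
    intro p hp
    have hσ : Tendsto (fun σ => σ) (𝓝[>] s) (𝓝 s) := tendsto_id.mono_left nhdsWithin_le_nhds
    have hwσ : Tendsto (fun σ => w p σ) (𝓝[>] s) (𝓝 (w p s)) :=
      (hw.continuousOn_time p s (left_mem_Icc.2 hst.le)).mono_left
        (nhdsWithin_le_of_mem (Icc_mem_nhdsGT hst))
    have hqσ : Tendsto (fun σ => p - (x + (t - σ) * v)) (𝓝[>] s) (𝓝 (p - y)) :=
      (((hσ.const_sub t).mul_const v).const_add x).const_sub p
    refine le_of_tendsto_of_tendsto (((hσ.const_sub t).mul (hwσ.sub_const v)).mul hqσ)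
      (hqσ.pow 2) ?_
    filter_upwards [Ioo_mem_nhdsGT hst] with σ hσI
    have hsub : Icc σ t ⊆ Ioc s t := fun τ hτ => ⟨hσI.1.trans_le hτ.1, hτ.2⟩
    have hwσ := hw.mono (hsub.trans Ioc_subset_Icc_self)
    have hcσ := hc.mono (prod_mono le_rfl hsub)
    have hq := add_mul_mem_Ioo_of_mem_Icc hx hy ⟨sub_nonneg.2 hσI.2.le, by linarith [hσI.1]⟩
    have hval : w (x + (t - σ) * v) σ = v := hwσ.eq_foot_of_continuousOn hσI.2.le hcσ hx hq
    have hcross := hwσ.mul_sub_le_sq_of_continuousOn hσI.2.le hcσ hp hq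
      (by rwa [hval, add_sub_cancel_right])
    rwa [hval] at hcross
  have hmin : IsLocalMin (fun p => (p - y) ^ 2 - (t - s) * (w p s - v) * (p - y)) y := by
    filter_upwards [Ioo_mem_nhds hy.1 hy.2] with p hp
    simpa using hnocross p hp
  have hid := (hasDerivAt_id y).sub_const y
  have hderiv := hmin.hasDerivAt_eq_zero ((hid.pow 2).sub
    ((((hw.hasDerivAt_space (left_mem_Icc.2 hst.le) y).sub_const v).const_mul (t - s)).mul hid))
  have hmul : (t - s) * (w y s - v) = 0 := by simpa using hderiv
  exact sub_eq_zero.1 ((mul_eq_zero.1 hmul).resolve_left (sub_pos.2 hst).ne')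

end IsBurgersSolution

section UniformLipschitz

open scoped NNReal

lemma eventually_continuousWithinAt_of_eventually_lipschitzOnWith {X T Y : Type*}
    [PseudoEMetricSpace X] [TopologicalSpace T] [PseudoEMetricSpace Y] {f : X → T → Y} {J : Set T}
    {U : Set X} {K : ℝ≥0} {x : X} {t : T} (hf : ∀ x, ContinuousOn (f x) J) (hU : U ∈ 𝓝 x)
    (hK : ∀ᶠ s in 𝓝[J] t, LipschitzOnWith K (fun x => f x s) U) :
    ∀ᶠ q in 𝓝 (x, t), q ∈ univ ×ˢ J →
      ContinuousWithinAt (Function.uncurry f) (univ ×ˢ J) q := by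
  obtain ⟨V, hV, hVJ⟩ := mem_nhdsWithin_iff_exists_mem_nhds_inter.1 hK
  have hc : ContinuousOn (Function.uncurry f) (U ×ˢ (V ∩ J)) :=
    continuousOn_prod_of_continuousOn_lipschitzOnWith _ K
      (fun x _ => (hf x).mono inter_subset_right) fun s hs => hVJ hs
  filter_upwards [eventually_mem_nhds_iff.2 (prod_mem_nhds hU hV)] with q hq hqJ
  have hqUV := mem_of_mem_nhds hq
  refine (hc q ⟨hqUV.1, hqUV.2, hqJ.2⟩).mono_of_mem_nhdsWithin ?_
  filter_upwards [self_mem_nhdsWithin, nhdsWithin_le_nhds hq] with p hpJ hpUV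
  exact ⟨hpUV.1, hpUV.2, hpJ.2⟩

/-- By Baire, Lipschitz constants and radii that vary from slice to slice can be made uniform near
some point of `P`. -/
lemma exists_eventually_lipschitzOnWith {X T Y : Type*} [PseudoMetricSpace X] [TopologicalSpace T]
    [PseudoEMetricSpace Y] {f : X → T → Y} {P : Set (X × T)} [BaireSpace P] [Nonempty P]
    (hf : ∀ x, ContinuousOn (f x) (Prod.snd '' P))
    (hlip : ∀ p ∈ P, LocallyLipschitz fun x => f x p.2) :
    ∃ p ∈ P, ∃ K, ∃ U ∈ 𝓝 p.1, ∀ᶠ q in 𝓝[P] p, LipschitzOnWith K (fun x => f x q.2) U := by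
  set F : ℕ → Set P := fun n =>
    {q | LipschitzOnWith n (fun x => f x q.1.2) (Metric.ball q.1.1 (1 / (n + 1)))}
  have hclosed : ∀ n, IsClosed (F n) := by
    refine fun n => isClosed_iff_frequently.2 fun q hq x hx y hy => ?_
    have hlim : ∀ z, Tendsto (fun q' : P => f z q'.1.2) (𝓝 q) (𝓝 (f z q.1.2)) := fun z =>
      ((hf z).comp_continuous (continuous_snd.comp continuous_subtype_val)
        fun q' => mem_image_of_mem _ q'.2).tendsto q
    have hball : ∀ z ∈ Metric.ball q.1.1 (1 / (n + 1)),
        ∀ᶠ q' : P in 𝓝 q, z ∈ Metric.ball q'.1.1 (1 / (n + 1)) := fun z hz =>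
      (by fun_prop : Continuous fun q' : P => dist z q'.1.1).continuousAt.eventually_lt_const hz
    refine le_of_tendsto_of_frequently ((hlim x).edist (hlim y)) ?_
    exact (hq.and_eventually ((hball x hx).and (hball y hy))).mono fun q' h => h.1 h.2.1 h.2.2
  have hcover : ⋃ n, F n = univ := by
    refine eq_univ_of_forall fun q => mem_iUnion.2 ?_
    obtain ⟨K, V, hV, hK⟩ := hlip q q.2 q.1.1
    obtain ⟨r, hr, hrV⟩ := Metric.mem_nhds_iff.1 hV
    obtain ⟨n, hn⟩ := exists_nat_gt (max (K : ℝ) (1 / r))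
    refine ⟨n, (hK.mono ((Metric.ball_subset_ball ?_).trans hrV)).weaken ?_⟩
    · exact (one_div_le (by positivity) hr).2 (by linarith [le_max_right (K : ℝ) (1 / r)])
    · exact_mod_cast ((le_max_left _ _).trans hn.le : (K : ℝ) ≤ n)
  obtain ⟨n, q, hq⟩ := nonempty_interior_of_iUnion_of_closed hclosed hcover
  refine ⟨q, q.2, n, Metric.ball q.1.1 (1 / (n + 1) / 2), Metric.ball_mem_nhds _ (by positivity),
    (eventually_nhds_subtype_iff P q
      fun q' => LipschitzOnWith n (fun x => f x q'.2) (Metric.ball q.1.1 (1 / (n + 1) / 2))).1 ?_⟩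
  have hnear : ∀ᶠ q' : P in 𝓝 q, dist q.1.1 q'.1.1 < 1 / (n + 1) / 2 :=
    (by fun_prop : Continuous fun q' : P => dist q.1.1 q'.1.1).continuousAt.eventually_lt_const
      (by simpa using (by positivity : (0 : ℝ) < n + 1))
  filter_upwards [mem_interior_iff_mem_nhds.1 hq, hnear] with q' hF hdist
  exact LipschitzOnWith.mono hF (Metric.ball_subset_ball' (by linarith))

lemma lipschitzOnWith_comp_neg {f : ℝ → ℝ} {U : Set ℝ} {K : ℝ≥0} (hf : LipschitzOnWith K f U) :
    LipschitzOnWith K (fun x => f (-x)) (-U) := fun x hx y hy => by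
  simpa only [edist_neg_neg] using hf hx hy

lemma lipschitzOnWith_two_mul_of_eq_comp_add {f g : ℝ → ℝ} {U V : Set ℝ} {K : ℝ≥0} {k : ℝ}
    (hg : LipschitzOnWith K g V) (hk : 0 ≤ k) (hkK : k * K ≤ 1 / 2)
    (hfoot : ∀ x ∈ U, x + k * f x ∈ V ∧ g (x + k * f x) = f x) :
    LipschitzOnWith (2 * K) f U := by
  refine LipschitzOnWith.of_dist_le_mul fun x hx y hy => ?_
  obtain ⟨hxV, hxg⟩ := hfoot x hx
  obtain ⟨hyV, hyg⟩ := hfoot y hy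
  have hfeet : |x + k * f x - (y + k * f y)| ≤ |x - y| + k * |f x - f y| := by
    rw [← abs_of_nonneg hk, ← abs_mul, abs_of_nonneg hk]
    exact (abs_add_le _ _).trans_eq' (by ring_nf)
  have hlip : |f x - f y| ≤ K * (|x - y| + k * |f x - f y|) := by
    have := hg.dist_le_mul _ hxV _ hyV
    rw [hxg, hyg, Real.dist_eq, Real.dist_eq] at this
    exact this.trans (mul_le_mul_of_nonneg_left hfeet K.2)
  have := mul_le_mul_of_nonneg_right hkK (abs_nonneg (f x - f y))
  rw [Real.dist_eq, Real.dist_eq, NNReal.coe_mul, NNReal.coe_ofNat]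
  linarith

end UniformLipschitz

section JointContinuity

open scoped NNReal

variable {w : ℝ → ℝ → ℝ} {a b a' b' x s t t₀ A B : ℝ}

lemma exists_add_mul_eq_endpoint {v T : ℝ} (hx : x ∈ Icc a b) (hT : 0 ≤ T)
    (hout : x + T * v ∉ Icc a b) : ∃ u ∈ Icc 0 T, x + u * v = a ∨ x + u * v = b := by
  have hivt := intermediate_value_uIcc
    (by fun_prop : ContinuousOn (fun u => x + u * v) (uIcc 0 T))
  simp only [zero_mul, add_zero] at hivt
  rw [uIcc_of_le hT] at hivt
  rcases lt_or_ge (x + T * v) a with h | h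
  · obtain ⟨u, hu, hux⟩ := hivt (mem_uIcc.2 (Or.inr ⟨h.le, hx.1⟩))
    exact ⟨u, hu, Or.inl hux⟩
  · obtain ⟨u, hu, hux⟩ := hivt (mem_uIcc.2 (Or.inl ⟨hx.2, (not_le.1 (hout ⟨h, ·⟩)).le⟩))
    exact ⟨u, hu, Or.inr hux⟩

lemma exists_last_mem_of_isClosed {T : Set ℝ} (hT : IsClosed T) (ht₀ : t₀ ∈ T) (hs : t₀ ≤ s) :
    ∃ σ ∈ T, σ ∈ Icc t₀ s ∧ ∀ τ ∈ Ioc σ s, τ ∉ T := by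
  obtain ⟨σ, hσ, hmax⟩ := (isCompact_Icc.inter_left hT).exists_isGreatest
    ⟨t₀, ht₀, left_mem_Icc.2 hs⟩
  exact ⟨σ, hσ.1, hσ.2, fun τ hτ hτT =>
    (hmax ⟨hτT, hσ.2.1.trans hτ.1.le, hτ.2⟩).not_gt hτ.1⟩

namespace IsBurgersSolution

/-- The value `w(x, t)` is carried back along its characteristic to the bottom or to a side of the
rectangle. -/
lemma abs_le_of_abs_le_on_sides {Λ : ℝ} (hw : IsBurgersSolution w (Icc s t)) (hst : s ≤ t)
    (hab : Icc a' b' ⊆ Ioo a b) (hc : ContinuousOn (Function.uncurry w) (Ioo a b ×ˢ Ioc s t))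
    (hbot : ∀ z ∈ Icc a' b', |w z s| ≤ Λ) (hleft : ∀ τ ∈ Icc s t, |w a' τ| ≤ Λ)
    (hright : ∀ τ ∈ Icc s t, |w b' τ| ≤ Λ) (hx : x ∈ Icc a' b') : |w x t| ≤ Λ := by
  have hvalue : ∀ u ∈ Icc 0 (t - s), x + u * w x t ∈ Ioo a b →
      w (x + u * w x t) (t - u) = w x t := by
    intro u hu hmem
    have hsub : Icc (t - u) t ⊆ Icc s t := Icc_subset_Icc_left (by linarith [hu.2])
    have := (hw.mono hsub).eq_foot_of_continuousOn_Ioc (x := x) (by linarith [hu.1])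
      (hc.mono (prod_mono le_rfl (Ioc_subset_Ioc_left (by linarith [hu.2])))) (hab hx)
      (by rwa [sub_sub_cancel])
    rwa [sub_sub_cancel] at this
  have hts : t - s ∈ Icc 0 (t - s) := right_mem_Icc.2 (sub_nonneg.2 hst)
  by_cases hfoot : x + (t - s) * w x t ∈ Icc a' b'
  · have := hvalue _ hts (hab hfoot)
    rw [sub_sub_cancel] at this
    exact this ▸ hbot _ hfoot
  · obtain ⟨u, hu, hend⟩ := exists_add_mul_eq_endpoint hx hts.1 hfoot
    have htu : t - u ∈ Icc s t := ⟨by linarith [hu.2], by linarith [hu.1]⟩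
    have hle : a' ≤ b' := hx.1.trans hx.2
    rcases hend with h | h
    · have := hvalue u hu (h ▸ hab (left_mem_Icc.2 hle))
      exact this ▸ h.symm ▸ hleft _ htu
    · have := hvalue u hu (h ▸ hab (right_mem_Icc.2 hle))
      exact this ▸ h.symm ▸ hright _ htu

section PartiallyLipschitz

variable {T : Set ℝ} {K : ℝ≥0}

lemma exists_forall_abs_le (hw : IsBurgersSolution w (Icc t₀ B)) (hT : IsClosed T) (ht₀ : t₀ ∈ T)
    (hab : Icc a' b' ⊆ Ioo a b) (hK : ∀ s ∈ T, LipschitzOnWith K (fun x => w x s) (Ioo a b))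
    (hc : ContinuousOn (Function.uncurry w) (Ioo a b ×ˢ (Icc t₀ B \ T))) :
    ∃ Λ, ∀ x ∈ Icc a' b', ∀ s ∈ Icc t₀ B, |w x s| ≤ Λ := by
  obtain ⟨Λa, hΛa⟩ := isCompact_Icc.exists_bound_of_continuousOn (hw.continuousOn_time a')
  obtain ⟨Λb, hΛb⟩ := isCompact_Icc.exists_bound_of_continuousOn (hw.continuousOn_time b')
  simp only [Real.norm_eq_abs] at hΛa hΛb
  refine ⟨max Λa Λb + K * (b' - a'), fun x hx s hs => ?_⟩
  have hle : a' ≤ b' := hx.1.trans hx.2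
  have hKnn : 0 ≤ K * (b' - a') := mul_nonneg K.2 (sub_nonneg.2 hle)
  obtain ⟨σ, hσT, hσ, hlast⟩ := exists_last_mem_of_isClosed hT ht₀ hs.1
  have hsub : Icc σ s ⊆ Icc t₀ B := Icc_subset_Icc hσ.1 hs.2
  refine (hw.mono hsub).abs_le_of_abs_le_on_sides hσ.2 hab
    (hc.mono (prod_mono le_rfl fun τ hτ => ⟨hsub (Ioc_subset_Icc_self hτ), hlast τ hτ⟩))
    (fun z hz => ?_)
    (fun τ hτ => (hΛa τ (hsub hτ)).trans (by linarith [le_max_left Λa Λb]))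
    (fun τ hτ => (hΛb τ (hsub hτ)).trans (by linarith [le_max_right Λa Λb])) hx
  have hlip := (hK σ hσT).dist_le_mul z (hab hz) a' (hab (left_mem_Icc.2 hle))
  rw [Real.dist_eq, Real.dist_eq, abs_of_nonneg (sub_nonneg.2 hz.1)] at hlip
  have hza : K * (z - a') ≤ K * (b' - a') := mul_le_mul_of_nonneg_left (by linarith [hz.2]) K.2
  have hσa := hΛa σ ⟨hσ.1, hσ.2.trans hs.2⟩
  have htri : |w z σ| ≤ |w z σ - w a' σ| + |w a' σ| := by
    simpa using abs_add_le (w z σ - w a' σ) (w a' σ)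
  linarith [le_max_left Λa Λb]

lemma eventually_lipschitzOnWith_right (hw : IsBurgersSolution w (Icc t₀ B)) (hT : IsClosed T)
    (ht₀ : t₀ ∈ T) (hab : Icc a' b' ⊆ Ioo a b)
    (hK : ∀ s ∈ T, LipschitzOnWith K (fun x => w x s) (Ioo a b))
    (hc : ContinuousOn (Function.uncurry w) (Ioo a b ×ˢ (Icc t₀ B \ T))) :
    ∀ᶠ s in 𝓝[Icc t₀ B] t₀, LipschitzOnWith (2 * K) (fun x => w x s) (Icc a' b') := by
  obtain ⟨Λ, hΛ⟩ := hw.exists_forall_abs_le hT ht₀ hab hK hc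
  obtain ⟨δ, hδ, hmargin⟩ := isCompact_Icc.exists_cthickening_subset_open isOpen_Ioo hab
  have hsmall : ∀ᶠ s in 𝓝[Icc t₀ B] t₀, (s - t₀) * Λ < δ ∧ (s - t₀) * K < 1 / 2 :=
    nhdsWithin_le_nhds
      (((by fun_prop : Continuous fun s => (s - t₀) * Λ).continuousAt.eventually_lt_const
        (by simpa using hδ)).and
      ((by fun_prop : Continuous fun s => (s - t₀) * K).continuousAt.eventually_lt_const
        (by simp)))
  filter_upwards [hsmall, self_mem_nhdsWithin] with s ⟨hsΛ, hsK⟩ hs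
  obtain ⟨σ, hσT, hσ, hlast⟩ := exists_last_mem_of_isClosed hT ht₀ hs.1
  have hsub : Icc σ s ⊆ Icc t₀ B := Icc_subset_Icc hσ.1 hs.2
  have hle : s - σ ≤ s - t₀ := by linarith [hσ.1]
  refine lipschitzOnWith_two_mul_of_eq_comp_add (hK σ hσT) (sub_nonneg.2 hσ.2)
    ((mul_le_mul_of_nonneg_right hle K.2).trans hsK.le) fun x hx => ?_
  have hfoot : x + (s - σ) * w x s ∈ Ioo a b := by
    refine hmargin (Metric.mem_cthickening_of_dist_le _ x _ _ hx ?_)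
    rw [Real.dist_eq, add_sub_cancel_left, abs_mul, abs_of_nonneg (sub_nonneg.2 hσ.2)]
    exact (mul_le_mul hle (hΛ x hx s hs) (abs_nonneg _) (sub_nonneg.2 hs.1)).trans hsΛ.le
  exact ⟨hfoot, (hw.mono hsub).eq_foot_of_continuousOn_Ioc hσ.2
    (hc.mono (prod_mono le_rfl fun τ hτ => ⟨hsub (Ioc_subset_Icc_self hτ), hlast τ hτ⟩))
    (hab hx) hfoot⟩

lemma eventually_lipschitzOnWith (hw : IsBurgersSolution w (Icc A B)) (ht₀ : t₀ ∈ Icc A B)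
    (hT : IsClosed T) (ht₀T : t₀ ∈ T) (hab : Icc a' b' ⊆ Ioo a b)
    (hK : ∀ s ∈ T, LipschitzOnWith K (fun x => w x s) (Ioo a b))
    (hc : ContinuousOn (Function.uncurry w) (Ioo a b ×ˢ (Icc A B \ T))) :
    ∀ᶠ s in 𝓝[Icc A B] t₀, LipschitzOnWith (2 * K) (fun x => w x s) (Icc a' b') := by
  rw [← Icc_union_Icc_eq_Icc ht₀.1 ht₀.2, nhdsWithin_union, eventually_sup]
  have hl : Icc A t₀ ⊆ Icc A B := Icc_subset_Icc_right ht₀.2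
  have hr : Icc t₀ B ⊆ Icc A B := Icc_subset_Icc_left ht₀.1
  refine ⟨?_, (hw.mono hr).eventually_lipschitzOnWith_right hT ht₀T hab hK
    (hc.mono (prod_mono le_rfl (sdiff_subset_sdiff_left hr)))⟩
  have hw' := (hw.mono hl).reverse
  have hc' := continuousOn_reverse (hc.mono (prod_mono le_rfl (sdiff_subset_sdiff_left hl)))
  rw [neg_Icc] at hw'
  have hev := hw'.eventually_lipschitzOnWith_right (a := -b) (b := -a) (a' := -b') (b' := -a')
    hT.neg (by simpa using ht₀T)
    (by rw [← neg_Icc, ← neg_Ioo]; exact neg_subset_neg.2 hab)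
    (fun s hs => by rw [← neg_Ioo]; exact lipschitzOnWith_comp_neg (hK (-s) hs))
    (hc'.mono fun q hq => ⟨⟨lt_neg.1 hq.1.2, neg_lt.1 hq.1.1⟩,
      ⟨le_neg.1 hq.2.1.2, neg_le.1 hq.2.1.1⟩, hq.2.2⟩)
  have hneg : Tendsto (fun s => -s) (𝓝[Icc A t₀] t₀) (𝓝[Icc (-t₀) (-A)] (-t₀)) := by
    rw [← neg_Icc]
    exact tendsto_nhdsWithin_of_tendsto_nhds_of_eventually_within _
      (continuous_neg.continuousAt.mono_left nhdsWithin_le_nhds)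
      (by filter_upwards [self_mem_nhdsWithin] with s hs using neg_mem_neg.2 hs)
  filter_upwards [hneg.eventually hev] with s hs
  simpa [← neg_Icc] using lipschitzOnWith_comp_neg hs

end PartiallyLipschitz

lemma eventually_continuousWithinAt {P : Set (ℝ × ℝ)} {U : Set ℝ} {K : ℝ≥0}
    (hw : IsBurgersSolution w (Icc A B)) (hP : IsClosed P) (ht : t ∈ Icc A B) (hxt : (x, t) ∈ P)
    (hc : ∀ q ∈ (univ ×ˢ Icc A B) \ P,
      ContinuousWithinAt (Function.uncurry w) (univ ×ˢ Icc A B) q)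
    (hU : U ∈ 𝓝 x) (hK : ∀ᶠ q in 𝓝[P] (x, t), LipschitzOnWith K (fun x => w x q.2) U) :
    ∀ᶠ q in 𝓝 (x, t), q ∈ univ ×ˢ Icc A B →
      ContinuousWithinAt (Function.uncurry w) (univ ×ˢ Icc A B) q := by
  obtain ⟨ε, hε, hball⟩ := Metric.nhds_basis_closedBall.eventually_iff.1
    ((eventually_nhdsWithin_iff.1 hK).and (continuous_fst.continuousAt.eventually_mem hU))
  have hdist : Metric.closedBall (x, t) ε = Icc (x - ε) (x + ε) ×ˢ Icc (t - ε) (t + ε) := by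
    rw [← closedBall_prod_same, Real.closedBall_eq_Icc, Real.closedBall_eq_Icc]
  rw [hdist] at hball
  have htε : t ∈ Icc (t - ε) (t + ε) := ⟨by linarith, by linarith⟩
  set T : Set ℝ := Prod.snd '' (P ∩ Metric.closedBall (x, t) ε)
  have hTc : IsClosed T :=
    (((isCompact_closedBall _ _).inter_left hP).image continuous_snd).isClosed
  have hJ : Icc (A ⊔ (t - ε)) (B ⊓ (t + ε)) = Icc (t - ε) (t + ε) ∩ Icc A B := by
    rw [inter_comm, Icc_inter_Icc]
  have hev := (hw.mono (hJ ▸ inter_subset_right)).eventually_lipschitzOnWith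
    (a := x - ε) (b := x + ε) (a' := x - ε / 2) (b' := x + ε / 2) (K := K)
    (hJ ▸ ⟨htε, ht⟩) hTc ⟨(x, t), ⟨hxt, Metric.mem_closedBall_self hε.le⟩, rfl⟩
    (Icc_subset_Ioo (by linarith) (by linarith)) ?_ ?_
  · rw [hJ, nhdsWithin_inter_of_mem
      (nhdsWithin_le_nhds (Icc_mem_nhds (sub_lt_self t hε) (lt_add_of_pos_right t hε)))] at hev
    exact eventually_continuousWithinAt_of_eventually_lipschitzOnWith hw.continuousOn_time
      (Icc_mem_nhds (sub_lt_self x (half_pos hε)) (lt_add_of_pos_right x (half_pos hε))) hev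
  · rintro _ ⟨q, ⟨hqP, hq⟩, rfl⟩
    rw [hdist] at hq
    exact ((hball hq).1 hqP).mono fun z hz => (hball (⟨Ioo_subset_Icc_self hz, htε⟩ :
      (z, t) ∈ Icc (x - ε) (x + ε) ×ˢ Icc (t - ε) (t + ε))).2
  · rw [hJ]
    refine fun q hq => (hc q ⟨⟨mem_univ _, hq.2.1.2⟩, fun hqP => hq.2.2 ?_⟩).mono
      (prod_mono (subset_univ _) (sdiff_subset.trans inter_subset_right))
    exact ⟨q, ⟨hqP, hdist ▸ ⟨Ioo_subset_Icc_self hq.1, hq.2.1.1⟩⟩, rfl⟩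

/-- The equation alone makes `w` jointly continuous: by Baire, near some point of a nonempty set of
bad points `w` would be uniformly Lipschitz in space at the bad times, and the characteristics
would propagate this to the neighbouring times. -/
lemma continuousOn (hw : IsBurgersSolution w (Icc A B)) :
    ContinuousOn (Function.uncurry w) (univ ×ˢ Icc A B) := by
  set S : Set (ℝ × ℝ) := univ ×ˢ Icc A B
  set G : Set (ℝ × ℝ) := {p | ∀ᶠ q in 𝓝 p, q ∈ S → ContinuousWithinAt (Function.uncurry w) S q}
  have hGo : IsOpen G := isOpen_setOfPred_eventually_nhds
  have hGcS : Gᶜ ⊆ S := by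
    intro p hp
    by_contra hpS
    have hSc : IsClosed S := isClosed_univ.prod isClosed_Icc
    exact hp (by filter_upwards [hSc.isOpen_compl.mem_nhds hpS] with q hq hqS using (hq hqS).elim)
  suffices hG : Gᶜ = ∅ from fun p hp => (compl_empty_iff.1 hG ▸ mem_univ p : p ∈ G).self_of_nhds hp
  by_contra hne
  have : Nonempty ↥Gᶜ := (nonempty_iff_ne_empty.2 hne).to_subtype
  have : CompleteSpace ↥Gᶜ := hGo.isClosed_compl.completeSpace_coe
  obtain ⟨⟨x, t⟩, hp, K, U, hU, hK⟩ := exists_eventually_lipschitzOnWith (f := w) (P := Gᶜ)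
    (fun x => (hw.continuousOn_time x).mono (image_subset_iff.2 fun p hp => (hGcS hp).2))
    fun p hp => ContDiff.locallyLipschitz (hw.contDiff _ (hGcS hp).2)
  exact hp (hw.eventually_continuousWithinAt hGo.isClosed_compl (hGcS hp).2 hp
    (fun q hq => (not_notMem.1 hq.2 : q ∈ G).self_of_nhds hq.1) hU hK)

lemma eq_foot (hw : IsBurgersSolution w (Icc A B)) (x : ℝ) (ht : t ∈ Icc A B) :
    w (x + (t - A) * w x t) A = w x t := by
  have hsub : Icc A t ⊆ Icc A B := Icc_subset_Icc_right ht.2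
  obtain ⟨R, hR⟩ := exists_gt (max |x| |x + (t - A) * w x t|)
  exact (hw.mono hsub).eq_foot_of_continuousOn ht.1
    (hw.continuousOn.mono (prod_mono (subset_univ _) hsub))
    (abs_lt.1 ((le_max_left _ _).trans_lt hR)) (abs_lt.1 ((le_max_right _ _).trans_lt hR))

end IsBurgersSolution

end JointContinuity

/-- The foot at time `0` of the characteristic of `∂_t w = w ∂_x w` reaching `x` at time `t`, where
`f = w(·, t)`. -/
def foot (t : ℝ) (f : ℝ → ℝ) (x : ℝ) : ℝ := x + t * f x

/-- The space derivative of `foot t f`. -/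
def stretch (t : ℝ) (f : ℝ → ℝ) (x : ℝ) : ℝ := 1 + t * deriv f x

section ImplicitSolution

variable {θ f g : ℝ → ℝ} {g' t x : ℝ}

lemma hasDerivAt_iteratedDeriv {n : WithTop ℕ∞} {k : ℕ} (hθ : ContDiff ℝ n θ)
    (hk : (k : WithTop ℕ∞) < n) (x : ℝ) :
    HasDerivAt (iteratedDeriv k θ) (iteratedDeriv (k + 1) θ x) x := by
  rw [iteratedDeriv_succ]
  exact (hθ.differentiable_iteratedDeriv k hk x).hasDerivAt

lemma hasDerivAt_foot (hf : Differentiable ℝ f) (t x : ℝ) :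
    HasDerivAt (foot t f) (stretch t f x) x :=
  (hasDerivAt_id x).add ((hf x).hasDerivAt.const_mul t)

lemma hasDerivAt_comp_foot (hf : Differentiable ℝ f) (hg : HasDerivAt g g' (foot t f x)) :
    HasDerivAt (fun x => g (foot t f x)) (g' * stretch t f x) x :=
  hg.comp x (hasDerivAt_foot hf t x)

lemma deriv_eq_deriv_foot_mul_stretch (hθ : Differentiable ℝ θ) (hf : Differentiable ℝ f)
    (hfoot : ∀ x, θ (foot t f x) = f x) (x : ℝ) :
    deriv f x = deriv θ (foot t f x) * stretch t f x := by
  have := hasDerivAt_comp_foot hf (hθ (foot t f x)).hasDerivAt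
  simp only [hfoot] at this
  exact this.deriv

lemma stretch_mul_eq_one (hθ : Differentiable ℝ θ) (hf : Differentiable ℝ f)
    (hfoot : ∀ x, θ (foot t f x) = f x) (x : ℝ) :
    stretch t f x * (1 - t * deriv θ (foot t f x)) = 1 := by
  have := deriv_eq_deriv_foot_mul_stretch hθ hf hfoot x
  rw [stretch] at this ⊢
  linear_combination t * this

lemma stretch_eq_inv (hθ : Differentiable ℝ θ) (hf : Differentiable ℝ f)
    (hfoot : ∀ x, θ (foot t f x) = f x) (x : ℝ) :
    stretch t f x = (1 - t * deriv θ (foot t f x))⁻¹ :=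
  eq_inv_of_mul_eq_one_left (stretch_mul_eq_one hθ hf hfoot x)

lemma contDiff_of_comp_foot_eq {n : ℕ} (hθ : ContDiff ℝ (n + 1) θ) (hf : Differentiable ℝ f)
    (hfoot : ∀ x, θ (foot t f x) = f x) : ContDiff ℝ (n + 1) f := by
  have hθd : Differentiable ℝ θ := hθ.differentiable (by simp)
  suffices h : ∀ k ≤ n + 1, ContDiff ℝ k f from mod_cast h (n + 1) le_rfl
  intro k hk
  induction k with
  | zero => exact contDiff_zero.2 hf.continuous
  | succ k ih =>
    have hfk : ContDiff ℝ k f := ih (by omega)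
    have hξ : ContDiff ℝ k (foot t f) := contDiff_id.add (contDiff_const.mul hfk)
    have hdθ : ContDiff ℝ k (deriv θ) :=
      ((contDiff_succ_iff_deriv.1 hθ).2.2).of_le (by exact_mod_cast (by omega : k ≤ n))
    have hm : ContDiff ℝ k (stretch t f) := by
      rw [funext (stretch_eq_inv hθd hf hfoot)]
      exact (contDiff_const.sub (contDiff_const.mul (hdθ.comp hξ))).inv fun x =>
        right_ne_zero_of_mul_eq_one (stretch_mul_eq_one hθd hf hfoot x)
    have hderiv : ContDiff ℝ k (deriv f) := by
      rw [funext (deriv_eq_deriv_foot_mul_stretch hθd hf hfoot)]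
      exact (hdθ.comp hξ).mul hm
    exact_mod_cast contDiff_succ_iff_deriv.2 ⟨hf, by simp, hderiv⟩

lemma hasDerivAt_stretch (hθ : ContDiff ℝ 2 θ) (hf : Differentiable ℝ f)
    (hfoot : ∀ x, θ (foot t f x) = f x) (x : ℝ) :
    HasDerivAt (stretch t f) (t * iteratedDeriv 2 θ (foot t f x) * stretch t f x ^ 3) x := by
  have hθd : Differentiable ℝ θ := hθ.differentiable two_ne_zero
  have hdθ := hasDerivAt_iteratedDeriv hθ (k := 1) (by norm_num) (foot t f x)
  rw [iteratedDeriv_one] at hdθ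
  have hinv := (((hasDerivAt_comp_foot hf hdθ).const_mul t).const_sub 1).inv
    (right_ne_zero_of_mul_eq_one (stretch_mul_eq_one hθd hf hfoot x))
  have heq : (fun x => 1 - t * deriv θ (foot t f x))⁻¹ = stretch t f :=
    (funext (stretch_eq_inv hθd hf hfoot)).symm
  refine (heq ▸ hinv).congr_deriv ?_
  rw [div_eq_mul_inv, ← inv_pow, ← stretch_eq_inv hθd hf hfoot]
  ring

lemma iteratedDeriv_two_eq (hθ : ContDiff ℝ 2 θ) (hf : Differentiable ℝ f)
    (hfoot : ∀ x, θ (foot t f x) = f x) (x : ℝ) :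
    iteratedDeriv 2 f x = iteratedDeriv 2 θ (foot t f x) * stretch t f x ^ 3 := by
  have hθd : Differentiable ℝ θ := hθ.differentiable two_ne_zero
  have hdθ := hasDerivAt_iteratedDeriv hθ (k := 1) (by norm_num) (foot t f x)
  rw [iteratedDeriv_one] at hdθ
  have hmul := (hasDerivAt_comp_foot hf hdθ).mul (hasDerivAt_stretch hθ hf hfoot x)
  rw [iteratedDeriv_succ, iteratedDeriv_one, funext (deriv_eq_deriv_foot_mul_stretch hθd hf hfoot)]
  refine hmul.deriv.trans ?_
  linear_combination (-iteratedDeriv 2 θ (foot t f x) * stretch t f x ^ 2) *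
    stretch_mul_eq_one hθd hf hfoot x

lemma iteratedDeriv_three_eq (hθ : ContDiff ℝ 3 θ) (hf : Differentiable ℝ f)
    (hfoot : ∀ x, θ (foot t f x) = f x) (x : ℝ) :
    iteratedDeriv 3 f x = iteratedDeriv 3 θ (foot t f x) * stretch t f x ^ 4 +
      3 * t * iteratedDeriv 2 θ (foot t f x) ^ 2 * stretch t f x ^ 5 := by
  have hθ2 : ContDiff ℝ 2 θ := hθ.of_le (by norm_num)
  have hmul := (hasDerivAt_comp_foot hf (hasDerivAt_iteratedDeriv hθ (k := 2) (by norm_num)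
    (foot t f x))).mul ((hasDerivAt_stretch hθ2 hf hfoot x).pow 3)
  rw [iteratedDeriv_succ, funext (iteratedDeriv_two_eq hθ2 hf hfoot)]
  refine hmul.deriv.trans ?_
  simp only [Pi.pow_apply, Nat.cast_ofNat]
  ring

lemma abs_stretch_le {N : ℝ} (hθ : Differentiable ℝ θ) (hf : Differentiable ℝ f)
    (hfoot : ∀ x, θ (foot t f x) = f x) (hN : ∀ x, |deriv θ x| ≤ N) (ht : 0 ≤ t)
    (htN : t * N ≤ 1 / 11) (x : ℝ) : |stretch t f x| ≤ 11 / 10 := by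
  have hle : 10 / 11 ≤ 1 - t * deriv θ (foot t f x) := by
    linarith [mul_le_mul_of_nonneg_left ((le_abs_self _).trans (hN (foot t f x))) ht]
  rw [stretch_eq_inv hθ hf hfoot, abs_inv, abs_of_pos (by linarith)]
  exact (inv_anti₀ (by norm_num) hle).trans_eq (by norm_num)

lemma abs_iteratedDeriv_le_two_mul {N : ℝ} (hθ : ContDiff ℝ 3 θ) (hf : Differentiable ℝ f)
    (hfoot : ∀ x, θ (foot t f x) = f x) (hN : ∀ j ≤ 3, ∀ x, |iteratedDeriv j θ x| ≤ N)
    (ht : 0 ≤ t) (htN : t * N ≤ 1 / 11) {j : ℕ} (hj : j ≤ 3) (x : ℝ) :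
    |iteratedDeriv j f x| ≤ 2 * N := by
  have hN0 : 0 ≤ N := (abs_nonneg _).trans (hN 0 (by norm_num) 0)
  have hθd : Differentiable ℝ θ := hθ.differentiable (by norm_num)
  have hm := abs_stretch_le hθd hf hfoot
    (fun x => iteratedDeriv_one (f := θ) ▸ hN 1 (by norm_num) x) ht htN x
  have hpow : ∀ k, |stretch t f x| ^ k ≤ (11 / 10) ^ k := fun k =>
    pow_le_pow_left₀ (abs_nonneg _) hm k
  interval_cases j
  · rw [iteratedDeriv_zero, ← hfoot]
    exact (hN 0 (by norm_num) _).trans (by linarith)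
  · rw [iteratedDeriv_one, deriv_eq_deriv_foot_mul_stretch hθd hf hfoot, ← iteratedDeriv_one,
      abs_mul]
    have := mul_le_mul (hN 1 (by norm_num) (foot t f x)) hm (abs_nonneg _) hN0
    linarith
  · rw [iteratedDeriv_two_eq (hθ.of_le (by norm_num)) hf hfoot, abs_mul, abs_pow]
    have := mul_le_mul (hN 2 (by norm_num) (foot t f x)) (hpow 3) (by positivity) hN0
    linarith
  · rw [iteratedDeriv_three_eq hθ hf hfoot]
    refine (abs_add_le _ _).trans ?_
    rw [abs_mul, abs_mul, abs_mul, abs_pow, abs_pow, abs_pow,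
      abs_of_nonneg (by positivity : 0 ≤ 3 * t)]
    have hlin := mul_le_mul (hN 3 le_rfl (foot t f x)) (hpow 4) (by positivity) hN0
    have hsq : t * |iteratedDeriv 2 θ (foot t f x)| ^ 2 ≤ 1 / 11 * N := by
      have := pow_le_pow_left₀ (abs_nonneg _) (hN 2 (by norm_num) (foot t f x)) 2
      nlinarith
    have hquad := mul_le_mul hsq (hpow 5) (by positivity) (by positivity)
    linarith

end ImplicitSolution

section CosineTransform

/-- The cosine transform `x ↦ ∫ cos (x ξ) φ ξ dξ`, without normalising constant. For even `φ` it is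
the Fourier transform in the angular frequency convention. -/
def cosTransform (φ : ℝ → ℝ) (x : ℝ) : ℝ :=
  ∫ ξ, Real.cos (x * ξ) * φ ξ

variable {φ ψ : ℝ → ℝ}

lemma norm_cos_mul_le (φ : ℝ → ℝ) (x ξ : ℝ) : ‖Real.cos (x * ξ) * φ ξ‖ ≤ ‖φ ξ‖ := by
  rw [norm_mul]
  exact mul_le_of_le_one_left (norm_nonneg _) (Real.abs_cos_le_one _)

lemma integrable_cos_mul (hφ : Integrable φ) (x : ℝ) :
    Integrable fun ξ => Real.cos (x * ξ) * φ ξ :=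
  hφ.bdd_mul (c := 1) (by fun_prop) (.of_forall fun _ => Real.abs_cos_le_one _)

lemma continuous_cosTransform (hφ : Integrable φ) : Continuous (cosTransform φ) :=
  continuous_of_dominated (fun x => (integrable_cos_mul hφ x).aestronglyMeasurable)
    (fun x => .of_forall (norm_cos_mul_le φ x)) hφ.norm (.of_forall fun ξ => by fun_prop)

lemma norm_cosTransform_le (hφ : Integrable φ) (x : ℝ) : ‖cosTransform φ x‖ ≤ ∫ ξ, ‖φ ξ‖ :=
  norm_integral_le_of_norm_le hφ.norm (.of_forall (norm_cos_mul_le φ x))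

lemma cosTransform_add (hφ : Integrable φ) (hψ : Integrable ψ) (x : ℝ) :
    cosTransform (fun ξ => φ ξ + ψ ξ) x = cosTransform φ x + cosTransform ψ x := by
  simp only [cosTransform, mul_add]
  exact integral_add (integrable_cos_mul hφ x) (integrable_cos_mul hψ x)

lemma cosTransform_const_mul (c : ℝ) (φ : ℝ → ℝ) (x : ℝ) :
    cosTransform (fun ξ => c * φ ξ) x = c * cosTransform φ x := by
  simp only [cosTransform, mul_left_comm _ c]
  exact integral_const_mul _ _

lemma tendsto_cosTransform {ι : Type*} {l : Filter ι} [l.IsCountablyGenerated]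
    {F : ι → ℝ → ℝ} {g : ℝ → ℝ} (hF : ∀ᶠ i in l, AEStronglyMeasurable (F i))
    (hg : Integrable g) (hFg : ∀ᶠ i in l, ∀ ξ, ‖F i ξ‖ ≤ g ξ)
    (hlim : ∀ ξ, Tendsto (fun i => F i ξ) l (𝓝 (φ ξ))) (x : ℝ) :
    Tendsto (fun i => cosTransform (F i) x) l (𝓝 (cosTransform φ x)) := by
  refine tendsto_integral_filter_of_dominated_convergence g ?_ ?_ hg
    (.of_forall fun ξ => (hlim ξ).const_mul _)
  · filter_upwards [hF] with i hi
    exact (by fun_prop : Continuous fun ξ => Real.cos (x * ξ)).aestronglyMeasurable.mul hi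
  · filter_upwards [hFg] with i hi
    exact .of_forall fun ξ => (norm_cos_mul_le (F i) x ξ).trans (hi ξ)

lemma cosTransform_integral {ν : Measure ℝ} [SFinite ν] {k : ℝ → ℝ → ℝ}
    (hk : Integrable (Function.uncurry fun ξ t => k t ξ) (volume.prod ν)) (x : ℝ) :
    cosTransform (fun ξ => ∫ t, k t ξ ∂ν) x = ∫ t, cosTransform (k t) x ∂ν := by
  simp only [cosTransform, ← integral_const_mul]
  exact integral_integral_swap (hk.bdd_mul (c := 1)
    (by fun_prop : Continuous fun z : ℝ × ℝ => Real.cos (x * z.1)).aestronglyMeasurable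
    (.of_forall fun _ => Real.abs_cos_le_one _))

lemma integral_cosTransform_mul (hφ : Integrable φ) (hψ : Integrable ψ) :
    ∫ x, cosTransform φ x * ψ x = ∫ ξ, φ ξ * cosTransform ψ ξ := by
  simp only [cosTransform, ← integral_mul_const, ← integral_const_mul]
  rw [integral_integral_swap]
  · congr 1 with ξ
    congr 1 with x
    rw [mul_comm x ξ]
    ring
  · have hint : Integrable fun z : ℝ × ℝ => Real.cos (z.1 * z.2) * (ψ z.1 * φ z.2) :=
      (hψ.mul_prod hφ).bdd_mul (c := 1)
        (by fun_prop : Continuous fun z : ℝ × ℝ => Real.cos (z.1 * z.2)).aestronglyMeasurable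
        (.of_forall fun _ => Real.abs_cos_le_one _)
    exact hint.congr (.of_forall fun z => by simp only [Function.uncurry_def]; ring)

lemma integral_exp_mul_I_mul_re (hφ : Integrable φ) (x : ℝ) :
    (∫ ξ, Complex.exp (((x * ξ : ℝ) : ℂ) * Complex.I) * (φ ξ : ℂ)).re = cosTransform φ x := by
  have hint : Integrable fun ξ => Complex.exp (((x * ξ : ℝ) : ℂ) * Complex.I) * (φ ξ : ℂ) :=
    hφ.ofReal.bdd_mul (c := 1) (by fun_prop)
      (.of_forall fun ξ => (Complex.norm_exp_ofReal_mul_I _).le)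
  have hre := integral_re hint
  simp only [RCLike.re_to_complex, Complex.re_mul_ofReal, Complex.exp_ofReal_mul_I_re] at hre
  exact hre.symm

lemma cosTransform_gaussian {b : ℝ} (hb : 0 < b) (x : ℝ) :
    cosTransform (fun ξ => Real.exp (-b * ξ ^ 2)) x =
      √(Real.pi / b) * Real.exp (-x ^ 2 / (4 * b)) := by
  have hfourier := fourierIntegral_gaussian (b := b) (by simpa using hb) x
  have hrhs : (Real.pi / b : ℂ) ^ (1 / 2 : ℂ) * Complex.exp (-(x : ℂ) ^ 2 / (4 * b)) =
      ((√(Real.pi / b) * Real.exp (-x ^ 2 / (4 * b)) : ℝ) : ℂ) := by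
    rw [Real.sqrt_eq_rpow, Complex.ofReal_mul, Complex.ofReal_cpow (by positivity)]
    push_cast
    rfl
  rw [← integral_exp_mul_I_mul_re (integrable_exp_neg_mul_sq hb),
    ← Complex.ofReal_re (√(Real.pi / b) * _), ← hrhs, ← hfourier]
  congr! 4 with ξ
  · push_cast
    congr 1
    ring
  · push_cast
    rfl

lemma integrable_cosTransform_gaussian {b : ℝ} (hb : 0 < b) :
    Integrable (cosTransform fun ξ => Real.exp (-b * ξ ^ 2)) := by
  have h := (integrable_exp_neg_mul_sq (show 0 < 1 / (4 * b) by positivity)).const_mul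
    (√(Real.pi / b))
  refine h.congr (.of_forall fun x => ?_)
  dsimp only
  rw [cosTransform_gaussian hb]
  ring_nf

lemma integral_cosTransform_gaussian {b : ℝ} (hb : 0 < b) :
    ∫ x, cosTransform (fun ξ => Real.exp (-b * ξ ^ 2)) x = 2 * Real.pi := by
  have hexp (x : ℝ) : Real.exp (-x ^ 2 / (4 * b)) = Real.exp (-(1 / (4 * b)) * x ^ 2) := by
    congr 1
    ring
  simp only [cosTransform_gaussian hb, hexp]
  rw [integral_const_mul, integral_gaussian, ← Real.sqrt_mul (by positivity),
    show Real.pi / b * (Real.pi / (1 / (4 * b))) = (2 * Real.pi) ^ 2 by field_simp; ring]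
  exact Real.sqrt_sq (by positivity)

lemma exp_neg_mul_sq_le_one {b : ℝ} (hb : 0 ≤ b) (x : ℝ) : Real.exp (-b * x ^ 2) ≤ 1 :=
  Real.exp_le_one_iff.2 (by nlinarith [mul_nonneg hb (sq_nonneg x)])

variable {M : ℝ}

lemma integral_cosTransform_mul_gaussian_le (hφ : Integrable φ) (hM : ∀ ξ, φ ξ ≤ M) {b : ℝ}
    (hb : 0 < b) : ∫ x, cosTransform φ x * Real.exp (-b * x ^ 2) ≤ 2 * Real.pi * M := by
  have hG := integrable_exp_neg_mul_sq hb
  rw [integral_cosTransform_mul hφ hG, ← integral_cosTransform_gaussian hb, mul_comm,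
    ← integral_const_mul]
  refine integral_mono (hφ.mul_bdd (continuous_cosTransform hG).aestronglyMeasurable
    (.of_forall (norm_cosTransform_le hG))) ((integrable_cosTransform_gaussian hb).const_mul M)
    fun ξ => mul_le_mul_of_nonneg_right (hM ξ) ?_
  rw [cosTransform_gaussian hb]
  positivity

lemma setIntegral_cosTransform_le (hφ : Integrable φ) (hM : ∀ ξ, φ ξ ≤ M)
    (hpos : ∀ x, 0 ≤ cosTransform φ x) (R : ℝ) :
    ∫ x in Icc (-R) R, cosTransform φ x ≤ 2 * Real.pi * M := by
  have hcont := continuous_cosTransform hφ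
  have hint {b : ℝ} (hb : 0 < b) : Integrable fun x => cosTransform φ x * Real.exp (-b * x ^ 2) :=
    (integrable_exp_neg_mul_sq hb).bdd_mul hcont.aestronglyMeasurable
      (.of_forall (norm_cosTransform_le hφ))
  have hcutoff {b : ℝ} (hb : 0 < b) :
      ∫ x in Icc (-R) R, cosTransform φ x * Real.exp (-b * x ^ 2) ≤ 2 * Real.pi * M :=
    (setIntegral_le_integral (hint hb) (.of_forall fun x =>
      mul_nonneg (hpos x) (Real.exp_pos _).le)).trans
      (integral_cosTransform_mul_gaussian_le hφ hM hb)
  have hlim : Tendsto (fun b : ℝ => ∫ x in Icc (-R) R, cosTransform φ x * Real.exp (-b * x ^ 2))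
      (𝓝[>] 0) (𝓝 (∫ x in Icc (-R) R, cosTransform φ x)) := by
    refine tendsto_integral_filter_of_dominated_convergence (cosTransform φ)
      (.of_forall fun b => by fun_prop) (eventually_mem_nhdsWithin.mono fun b hb => .of_forall
        fun x => ?_) hcont.continuousOn.integrableOn_Icc (.of_forall fun x => ?_)
    · rw [norm_mul, Real.norm_of_nonneg (hpos x), Real.norm_eq_abs, Real.abs_exp]
      exact mul_le_of_le_one_right (hpos x) (exp_neg_mul_sq_le_one (le_of_lt hb) x)
    · have hb : Continuous fun b : ℝ => cosTransform φ x * Real.exp (-b * x ^ 2) := by fun_prop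
      simpa using (hb.tendsto 0).mono_left nhdsWithin_le_nhds
  exact le_of_tendsto hlim (eventually_mem_nhdsWithin.mono fun b hb => hcutoff hb)

lemma aecover_Icc_neg_natCast : AECover (volume : Measure ℝ) atTop fun n : ℕ => Icc (-(n : ℝ)) n :=
  aecover_Icc (tendsto_neg_atTop_atBot.comp tendsto_natCast_atTop_atTop)
    tendsto_natCast_atTop_atTop

lemma integrable_cosTransform (hφ : Integrable φ) (hM : ∀ ξ, φ ξ ≤ M)
    (hpos : ∀ x, 0 ≤ cosTransform φ x) : Integrable (cosTransform φ) :=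
  aecover_Icc_neg_natCast.integrable_of_integral_bounded_of_nonneg_ae (2 * Real.pi * M)
    (fun _ => (continuous_cosTransform hφ).continuousOn.integrableOn_Icc) (.of_forall hpos)
    (.of_forall fun n => setIntegral_cosTransform_le hφ hM hpos n)

lemma integral_cosTransform_le (hφ : Integrable φ) (hM : ∀ ξ, φ ξ ≤ M)
    (hpos : ∀ x, 0 ≤ cosTransform φ x) : ∫ x, cosTransform φ x ≤ 2 * Real.pi * M :=
  le_of_tendsto' (aecover_Icc_neg_natCast.integral_tendsto_of_countably_generated
    (integrable_cosTransform hφ hM hpos)) fun n => setIntegral_cosTransform_le hφ hM hpos n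

end CosineTransform

section PositiveDefiniteSymbols

/-- Positive definiteness of a bounded symbol: its cosine transform, in general only a distribution,
is nonnegative. This is encoded by testing the cosine transforms of all Gaussian truncations, which
exist without integrability of `p`. -/
structure IsPosDefSymbol (p : ℝ → ℝ) : Prop where
  measurable : Measurable p
  bounded : ∃ C, ∀ ξ, ‖p ξ‖ ≤ C
  nonneg : ∀ b > 0, ∀ x, 0 ≤ cosTransform (fun ξ => p ξ * Real.exp (-b * ξ ^ 2)) x

/-- Functions whose product with every positive definite symbol is one. Working with multipliers
avoids the theorem that products of positive definite functions are positive definite. -/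
def IsPosDefMultiplier (q : ℝ → ℝ) : Prop :=
  ∀ ⦃p : ℝ → ℝ⦄, IsPosDefSymbol p → IsPosDefSymbol fun ξ => p ξ * q ξ

variable {p q : ℝ → ℝ}

namespace IsPosDefSymbol

lemma integrable_mul_gaussian (hp : IsPosDefSymbol p) {b : ℝ} (hb : 0 < b) :
    Integrable fun ξ => p ξ * Real.exp (-b * ξ ^ 2) :=
  let ⟨_, hC⟩ := hp.bounded
  (integrable_exp_neg_mul_sq hb).bdd_mul hp.measurable.aestronglyMeasurable (.of_forall hC)

lemma one : IsPosDefSymbol fun _ => 1 where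
  measurable := measurable_const
  bounded := ⟨1, by simp⟩
  nonneg b hb x := by
    simp only [one_mul]
    rw [cosTransform_gaussian hb]
    positivity

lemma add (hp : IsPosDefSymbol p) (hq : IsPosDefSymbol q) :
    IsPosDefSymbol fun ξ => p ξ + q ξ where
  measurable := hp.measurable.add hq.measurable
  bounded :=
    let ⟨C, hC⟩ := hp.bounded
    let ⟨D, hD⟩ := hq.bounded
    ⟨C + D, fun ξ => norm_add_le_of_le (hC ξ) (hD ξ)⟩
  nonneg b hb x := by
    simp only [add_mul]
    rw [cosTransform_add (hp.integrable_mul_gaussian hb) (hq.integrable_mul_gaussian hb)]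
    exact add_nonneg (hp.nonneg b hb x) (hq.nonneg b hb x)

lemma const_mul (hp : IsPosDefSymbol p) {c : ℝ} (hc : 0 ≤ c) :
    IsPosDefSymbol fun ξ => c * p ξ where
  measurable := hp.measurable.const_mul c
  bounded :=
    let ⟨C, hC⟩ := hp.bounded
    ⟨‖c‖ * C, fun ξ => norm_mul_le_of_le le_rfl (hC ξ)⟩
  nonneg b hb x := by
    simp only [mul_assoc]
    rw [cosTransform_const_mul]
    exact mul_nonneg hc (hp.nonneg b hb x)

lemma of_tendsto {P : ℕ → ℝ → ℝ} {C : ℝ} (hP : ∀ n, IsPosDefSymbol (P n))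
    (hC : ∀ n ξ, ‖P n ξ‖ ≤ C) (hlim : ∀ ξ, Tendsto (fun n => P n ξ) atTop (𝓝 (p ξ))) :
    IsPosDefSymbol p where
  measurable := measurable_of_tendsto_metrizable (fun n => (hP n).measurable)
    (tendsto_pi_nhds.2 hlim)
  bounded := ⟨C, fun ξ => le_of_tendsto (hlim ξ).norm (.of_forall fun n => hC n ξ)⟩
  nonneg b hb x := by
    refine ge_of_tendsto' (tendsto_cosTransform
      (.of_forall fun n => ((hP n).integrable_mul_gaussian hb).aestronglyMeasurable)
      ((integrable_exp_neg_mul_sq hb).const_mul C) (.of_forall fun n ξ => ?_)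
      (fun ξ => (hlim ξ).mul_const _) x) fun n => (hP n).nonneg b hb x
    exact norm_mul_le_of_le (hC n ξ) (Real.abs_exp _).le

lemma integral {k : ℝ → ℝ → ℝ} {g : ℝ → ℝ} {ν : Measure ℝ} [SFinite ν]
    (hk : Measurable (Function.uncurry k)) (hg : Integrable g ν)
    (hkg : ∀ᵐ t ∂ν, ∀ ξ, ‖k t ξ‖ ≤ g t) (hpos : ∀ᵐ t ∂ν, IsPosDefSymbol (k t)) :
    IsPosDefSymbol fun ξ => ∫ t, k t ξ ∂ν where
  measurable := hk.stronglyMeasurable.integral_prod_left'.measurable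
  bounded := ⟨∫ t, g t ∂ν, fun ξ =>
    norm_integral_le_of_norm_le (f := fun t => k t ξ) hg (hkg.mono fun t ht => ht ξ)⟩
  nonneg b hb x := by
    simp only [← integral_mul_const]
    rw [cosTransform_integral (k := fun t ξ => k t ξ * Real.exp (-b * ξ ^ 2))]
    · exact integral_nonneg_of_ae (hpos.mono fun t ht => ht.nonneg b hb x)
    · refine ((integrable_exp_neg_mul_sq hb).mul_prod hg).mono' ?_ ?_
      · exact ((hk.comp measurable_swap).mul (by fun_prop :
          Measurable fun z : ℝ × ℝ => Real.exp (-b * z.1 ^ 2))).aestronglyMeasurable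
      · filter_upwards [Measure.quasiMeasurePreserving_snd.ae hkg] with z hz
        rw [mul_comm]
        exact norm_mul_le_of_le (hz z.1) (Real.abs_exp _).le

lemma mul_gaussian (hp : IsPosDefSymbol p) {y : ℝ} (hy : 0 ≤ y) :
    IsPosDefSymbol fun ξ => p ξ * Real.exp (-y * ξ ^ 2) where
  measurable := hp.measurable.mul (by fun_prop)
  bounded :=
    let ⟨C, hC⟩ := hp.bounded
    ⟨C * 1, fun ξ => norm_mul_le_of_le (hC ξ)
      ((Real.abs_exp _).trans_le (exp_neg_mul_sq_le_one hy ξ))⟩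
  nonneg b hb x := by
    convert hp.nonneg (y + b) (add_pos_of_nonneg_of_pos hy hb) x using 3 with ξ
    rw [mul_assoc, ← Real.exp_add]
    ring_nf

end IsPosDefSymbol

namespace IsPosDefMultiplier

lemma isPosDefSymbol (hq : IsPosDefMultiplier q) : IsPosDefSymbol q := by
  simpa only [one_mul] using hq .one

lemma const_mul (hq : IsPosDefMultiplier q) {c : ℝ} (hc : 0 ≤ c) :
    IsPosDefMultiplier fun ξ => c * q ξ := fun p hp => by
  simpa only [mul_left_comm] using (hq hp).const_mul hc

lemma pow (hq : IsPosDefMultiplier q) (n : ℕ) : IsPosDefMultiplier fun ξ => q ξ ^ n := by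
  induction n with
  | zero => exact fun p hp => by simpa only [pow_zero, mul_one] using hp
  | succ n ih => exact fun p hp => by simpa only [pow_succ, mul_assoc] using hq (ih hp)

lemma integral {k : ℝ → ℝ → ℝ} {g : ℝ → ℝ} {ν : Measure ℝ} [SFinite ν]
    (hk : Measurable (Function.uncurry k)) (hg : Integrable g ν)
    (hkg : ∀ᵐ t ∂ν, ∀ ξ, ‖k t ξ‖ ≤ g t) (hmul : ∀ᵐ t ∂ν, IsPosDefMultiplier (k t)) :
    IsPosDefMultiplier fun ξ => ∫ t, k t ξ ∂ν := fun p hp => by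
  obtain ⟨C, hC⟩ := hp.bounded
  simp only [← integral_const_mul]
  exact .integral ((hp.measurable.comp measurable_snd).mul hk) (hg.const_mul C)
    (hkg.mono fun t ht ξ => norm_mul_le_of_le (hC ξ) (ht ξ)) (hmul.mono fun t ht => ht hp)

lemma exp (hq : IsPosDefMultiplier q) : IsPosDefSymbol fun ξ => Real.exp (q ξ) := by
  obtain ⟨C, hC⟩ := hq.isPosDefSymbol.bounded
  have hsum (n : ℕ) : IsPosDefSymbol fun ξ => ∑ k ∈ Finset.range n, q ξ ^ k / k.factorial := by
    induction n with
    | zero => simpa using IsPosDefSymbol.one.const_mul le_rfl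
    | succ n ih =>
      simp only [Finset.sum_range_succ, div_eq_inv_mul] at ih ⊢
      exact ih.add ((hq.pow n).isPosDefSymbol.const_mul (by positivity))
  refine .of_tendsto (C := Real.exp C) hsum (fun n ξ => ?_) fun ξ => ?_
  · calc ‖∑ k ∈ Finset.range n, q ξ ^ k / (k.factorial : ℝ)‖
        ≤ ∑ k ∈ Finset.range n, C ^ k / k.factorial := norm_sum_le_of_le _ fun k _ => by
          rw [norm_div, norm_pow, RCLike.norm_natCast]
          gcongr
          exact hC ξ
      _ ≤ Real.exp C := Real.sum_le_exp_of_nonneg ((norm_nonneg _).trans (hC ξ)) n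
  · rw [Real.exp_eq_exp_ℝ]
    exact (NormedSpace.expSeries_div_hasSum_exp (q ξ)).tendsto_sum_nat

lemma gaussian {y : ℝ} (hy : 0 ≤ y) : IsPosDefMultiplier fun ξ => Real.exp (-y * ξ ^ 2) :=
  fun _ hp => hp.mul_gaussian hy

lemma inv_add_sq {t : ℝ} (ht : 0 < t) : IsPosDefMultiplier fun ξ => (t + ξ ^ 2)⁻¹ := by
  have hlaplace (ξ : ℝ) :
      ∫ y in Ioi 0, Real.exp (-t * y) * Real.exp (-y * ξ ^ 2) = (t + ξ ^ 2)⁻¹ := by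
    have hexp (y : ℝ) : Real.exp (-t * y) * Real.exp (-y * ξ ^ 2) =
        Real.exp (-(t + ξ ^ 2) * y) := by
      rw [← Real.exp_add]
      ring_nf
    simp only [hexp]
    rw [integral_exp_mul_Ioi (by nlinarith [sq_nonneg ξ])]
    simp [neg_div, -neg_add_rev]
  simp only [← hlaplace]
  refine .integral (g := fun y => Real.exp (-t * y)) (by fun_prop)
    (integrableOn_exp_mul_Ioi (neg_lt_zero.2 ht) 0) ?_ ?_
  all_goals filter_upwards [ae_restrict_mem measurableSet_Ioi] with y hy
  · intro ξ
    rw [norm_mul, Real.norm_eq_abs, Real.norm_eq_abs, Real.abs_exp, Real.abs_exp]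
    exact mul_le_of_le_one_right (Real.exp_pos _).le (exp_neg_mul_sq_le_one (le_of_lt hy) ξ)
  · exact (gaussian (le_of_lt hy)).const_mul (Real.exp_pos _).le

lemma integral_rpow_mul_inv_add_sq {α : ℝ} (hα : 0 < α) (R : ℝ) :
    IsPosDefMultiplier fun ξ => ∫ t in Ioc 0 R, t ^ α * (t + ξ ^ 2)⁻¹ := by
  have hint : IntegrableOn (fun t : ℝ => t ^ (α - 1)) (Ioc 0 R) :=
    (intervalIntegral.intervalIntegrable_rpow' (by linarith)).1
  refine .integral (by fun_prop) hint ?_ ?_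
  all_goals filter_upwards [ae_restrict_mem measurableSet_Ioc] with t ht
  · intro ξ
    have hpos : 0 < t + ξ ^ 2 := add_pos_of_pos_of_nonneg ht.1 (sq_nonneg ξ)
    rw [Real.norm_of_nonneg (mul_nonneg (Real.rpow_nonneg ht.1.le _) (inv_pos.2 hpos).le),
      Real.rpow_sub_one ht.1.ne', div_eq_mul_inv]
    exact mul_le_mul_of_nonneg_left (inv_anti₀ ht.1 (le_add_of_nonneg_right (sq_nonneg ξ)))
      (Real.rpow_nonneg ht.1.le _)
  · exact (inv_add_sq ht.1).const_mul (Real.rpow_nonneg ht.1.le _)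

end IsPosDefMultiplier

namespace IsPosDefSymbol

variable {α : ℝ}

/-- Expanding `rpowIntegrand₀₁ α t s = t ^ (α - 1) - t ^ α / (t + s)` leaves a positive constant
times the exponential of a multiplier; the truncation makes both pieces integrable. -/
lemma exp_neg_integral_rpowIntegrand (h0 : 0 < α) (h1 : α < 1) (R : ℝ) {c : ℝ} (hc : 0 ≤ c) :
    IsPosDefSymbol fun ξ =>
      Real.exp (-(c * ∫ t in Ioc 0 R, Real.rpowIntegrand₀₁ α t (ξ ^ 2))) := by
  have hrpow : IntegrableOn (fun t : ℝ => t ^ (α - 1)) (Ioc 0 R) :=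
    (intervalIntegral.intervalIntegrable_rpow' (by linarith)).1
  have hinteg (ξ : ℝ) : IntegrableOn (fun t => Real.rpowIntegrand₀₁ α t (ξ ^ 2)) (Ioc 0 R) :=
    (Real.integrableOn_rpowIntegrand₀₁_Ioi ⟨h0, h1⟩ (sq_nonneg ξ)).mono_set Ioc_subset_Ioi_self
  have hsplit (ξ : ℝ) : ∫ t in Ioc 0 R, t ^ α * (t + ξ ^ 2)⁻¹ =
      (∫ t in Ioc 0 R, t ^ (α - 1)) - ∫ t in Ioc 0 R, Real.rpowIntegrand₀₁ α t (ξ ^ 2) := by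
    rw [← integral_sub hrpow (hinteg ξ)]
    refine setIntegral_congr_fun measurableSet_Ioc fun t ht => ?_
    simp only [Real.rpowIntegrand₀₁_eq_sub h1.ne ht.1]
    ring
  have hexp := ((IsPosDefMultiplier.integral_rpow_mul_inv_add_sq h0 R).const_mul hc).exp.const_mul
    (Real.exp_pos (-(c * ∫ t in Ioc 0 R, t ^ (α - 1)))).le
  convert hexp using 2 with ξ
  rw [← Real.exp_add, hsplit]
  ring_nf

lemma exp_neg_abs_rpow (h0 : 0 < α) (h1 : α < 1) :
    IsPosDefSymbol fun ξ => Real.exp (-|ξ| ^ (2 * α)) := by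
  set c : ℝ := (∫ t in Ioi 0, Real.rpowIntegrand₀₁ α t 1)⁻¹
  have hc : 0 ≤ c := (inv_pos.2 (Real.integral_rpowIntegrand₀₁_one_pos ⟨h0, h1⟩)).le
  have hrep (ξ : ℝ) :
      |ξ| ^ (2 * α) = c * ∫ t in Ioi 0, Real.rpowIntegrand₀₁ α t (ξ ^ 2) := by
    rw [← Real.rpow_eq_const_mul_integral ⟨h0, h1⟩ (sq_nonneg ξ), Real.rpow_mul (abs_nonneg ξ),
      Real.rpow_two, sq_abs]
  refine .of_tendsto (C := 1) (fun n : ℕ => exp_neg_integral_rpowIntegrand h0 h1 n hc)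
    (fun n ξ => ?_) fun ξ => ?_
  · rw [Real.norm_eq_abs, Real.abs_exp, Real.exp_le_one_iff, neg_nonpos]
    exact mul_nonneg hc (setIntegral_nonneg measurableSet_Ioc fun t ht =>
      Real.rpowIntegrand₀₁_nonneg h0 ht.1.le (sq_nonneg ξ))
  · have hlim := intervalIntegral_tendsto_integral_Ioi 0
      (Real.integrableOn_rpowIntegrand₀₁_Ioi ⟨h0, h1⟩ (sq_nonneg ξ))
      (tendsto_natCast_atTop_atTop (R := ℝ))
    simp only [intervalIntegral.integral_of_le (Nat.cast_nonneg _)] at hlim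
    rw [hrep]
    exact (Real.continuous_exp.tendsto _).comp (hlim.const_mul c).neg

lemma cosTransform_nonneg (hp : IsPosDefSymbol p) (hint : Integrable p) (x : ℝ) :
    0 ≤ cosTransform p x := by
  have hlim : Tendsto (fun b : ℝ => cosTransform (fun ξ => p ξ * Real.exp (-b * ξ ^ 2)) x)
      (𝓝[>] 0) (𝓝 (cosTransform p x)) := by
    refine tendsto_cosTransform (l := 𝓝[>] 0) (eventually_mem_nhdsWithin.mono fun b hb =>
      (hp.integrable_mul_gaussian hb).aestronglyMeasurable) hint.norm
      (eventually_mem_nhdsWithin.mono fun b hb ξ => ?_) (fun ξ => ?_) x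
    · rw [norm_mul, Real.norm_eq_abs (Real.exp _), Real.abs_exp]
      exact mul_le_of_le_one_right (norm_nonneg _) (exp_neg_mul_sq_le_one (le_of_lt hb) ξ)
    · have hcont : Continuous fun b : ℝ => p ξ * Real.exp (-b * ξ ^ 2) := by fun_prop
      simpa using (hcont.tendsto 0).mono_left nhdsWithin_le_nhds
  exact ge_of_tendsto hlim (eventually_mem_nhdsWithin.mono fun b hb => hp.nonneg b hb x)

end IsPosDefSymbol

end PositiveDefiniteSymbols

section FractionalHeatKernel

variable {α t : ℝ}

lemma integrable_exp_neg_abs_rpow {β : ℝ} (hβ : 0 < β) :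
    Integrable fun ξ : ℝ => Real.exp (-|ξ| ^ β) := by
  refine .of_integral_ne_zero (ne_of_gt ?_)
  rw [integral_comp_abs (f := fun x => Real.exp (-x ^ β)), integral_exp_neg_rpow hβ]
  have := Real.Gamma_pos_of_pos (show 0 < 1 / β + 1 by positivity)
  positivity

lemma fracHeatKernel_eq_cosTransform (h0 : 0 < α) (x : ℝ) :
    fracHeatKernel α x =
      1 / (2 * Real.pi) * cosTransform (fun ξ => Real.exp (-|ξ| ^ (2 * α))) x := by
  rw [← integral_exp_mul_I_mul_re (integrable_exp_neg_abs_rpow (by positivity)), fracHeatKernel]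
  congr! 4 with ξ
  rw [sub_eq_add_neg, Complex.exp_add, ← Complex.ofReal_neg, Complex.ofReal_exp]

lemma cosTransform_exp_neg_abs_rpow_nonneg (h0 : 0 < α) (h1 : α < 1) (x : ℝ) :
    0 ≤ cosTransform (fun ξ => Real.exp (-|ξ| ^ (2 * α))) x :=
  (IsPosDefSymbol.exp_neg_abs_rpow h0 h1).cosTransform_nonneg
    (integrable_exp_neg_abs_rpow (by positivity)) x

lemma exp_neg_abs_rpow_le_one (β ξ : ℝ) : Real.exp (-|ξ| ^ β) ≤ 1 :=
  Real.exp_le_one_iff.2 (neg_nonpos.2 (Real.rpow_nonneg (abs_nonneg ξ) β))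

lemma fracHeatKernel_nonneg (h0 : 0 < α) (h1 : α < 1) (x : ℝ) : 0 ≤ fracHeatKernel α x := by
  rw [fracHeatKernel_eq_cosTransform h0]
  exact mul_nonneg (by positivity) (cosTransform_exp_neg_abs_rpow_nonneg h0 h1 x)

lemma integrable_fracHeatKernel (h0 : 0 < α) (h1 : α < 1) : Integrable (fracHeatKernel α) := by
  rw [funext (fracHeatKernel_eq_cosTransform h0)]
  exact (integrable_cosTransform (integrable_exp_neg_abs_rpow (by positivity))
    (exp_neg_abs_rpow_le_one _) (cosTransform_exp_neg_abs_rpow_nonneg h0 h1)).const_mul _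

lemma integral_fracHeatKernel_le_one (h0 : 0 < α) (h1 : α < 1) :
    ∫ x, fracHeatKernel α x ≤ 1 := by
  have hle := integral_cosTransform_le (integrable_exp_neg_abs_rpow (by positivity))
    (exp_neg_abs_rpow_le_one _) (cosTransform_exp_neg_abs_rpow_nonneg h0 h1)
  simp only [fracHeatKernel_eq_cosTransform h0]
  rwa [integral_const_mul, one_div, inv_mul_le_iff₀ (by positivity)]

lemma fracHeatKernelT_nonneg (h0 : 0 < α) (h1 : α < 1) (ht : 0 ≤ t) (x : ℝ) :
    0 ≤ fracHeatKernelT α t x :=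
  mul_nonneg (Real.rpow_nonneg ht _) (fracHeatKernel_nonneg h0 h1 _)

lemma integrable_fracHeatKernelT (h0 : 0 < α) (h1 : α < 1) (ht : 0 < t) :
    Integrable (fracHeatKernelT α t) :=
  ((integrable_fracHeatKernel h0 h1).comp_mul_left' (Real.rpow_pos_of_pos ht _).ne').const_mul _

lemma integral_fracHeatKernelT (α : ℝ) (ht : 0 < t) :
    ∫ x, fracHeatKernelT α t x = ∫ x, fracHeatKernel α x := by
  have hscale : 0 < t ^ (-(1 / (2 * α))) := Real.rpow_pos_of_pos ht _
  simp only [fracHeatKernelT]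
  rw [integral_const_mul, Measure.integral_comp_mul_left, abs_of_pos (inv_pos.2 hscale),
    smul_eq_mul, mul_inv_cancel_left₀ hscale.ne']

lemma integral_norm_fracHeatKernelT_le_one (h0 : 0 < α) (h1 : α < 1) (ht : 0 < t) :
    ∫ x, ‖fracHeatKernelT α t x‖ ≤ 1 := by
  simp only [Real.norm_of_nonneg (fracHeatKernelT_nonneg h0 h1 ht.le _)]
  exact (integral_fracHeatKernelT α ht).trans_le (integral_fracHeatKernel_le_one h0 h1)

end FractionalHeatKernel

section Convolution

variable {k f : ℝ → ℝ} {M : ℝ} {n : ℕ}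

lemma norm_mul_comp_sub_le (hM : ∀ x, |f x| ≤ M) (x y : ℝ) : ‖k y * f (x - y)‖ ≤ ‖k y‖ * M :=
  norm_mul_le_of_le le_rfl (hM _)

lemma hasDerivAt_integral_mul_comp_sub {f' : ℝ → ℝ} (hk : Integrable k)
    (hf : ∀ x, HasDerivAt f (f' x) x) (hf' : Continuous f') (hM : ∀ x, |f x| ≤ M)
    (hM' : ∀ x, |f' x| ≤ M) (x : ℝ) :
    HasDerivAt (fun x => ∫ y, k y * f (x - y)) (∫ y, k y * f' (x - y)) x := by
  have hmeas {g : ℝ → ℝ} (hg : Continuous g) (x : ℝ) :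
      AEStronglyMeasurable fun y => k y * g (x - y) :=
    hk.aestronglyMeasurable.mul (by fun_prop : Continuous fun y => g (x - y)).aestronglyMeasurable
  have hcont : Continuous f := continuous_iff_continuousAt.2 fun x => (hf x).continuousAt
  exact (hasDerivAt_integral_of_dominated_loc_of_deriv_le
    (F' := fun x y => k y * f' (x - y)) univ_mem (.of_forall (hmeas hcont))
    ((hk.norm.mul_const M).mono' (hmeas hcont x) (.of_forall (norm_mul_comp_sub_le hM x)))
    (hmeas hf' x) (.of_forall fun y x _ => norm_mul_comp_sub_le hM' x y) (hk.norm.mul_const M)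
    (.of_forall fun y x _ => ((hf (x - y)).comp_sub_const x y).const_mul (k y))).2

lemma iteratedDeriv_integral_mul_comp_sub (hk : Integrable k) (hf : ContDiff ℝ n f)
    (hM : ∀ j ≤ n, ∀ x, |iteratedDeriv j f x| ≤ M) {j : ℕ} (hj : j ≤ n) :
    iteratedDeriv j (fun x => ∫ y, k y * f (x - y)) =
      fun x => ∫ y, k y * iteratedDeriv j f (x - y) := by
  induction j with
  | zero => simp only [iteratedDeriv_zero]
  | succ j ih =>
    rw [iteratedDeriv_succ, ih (by omega)]
    exact funext fun x => (hasDerivAt_integral_mul_comp_sub hk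
      (hasDerivAt_iteratedDeriv hf (by exact_mod_cast hj))
      (hf.continuous_iteratedDeriv (j + 1) (by exact_mod_cast hj)) (hM j (by omega))
      (hM (j + 1) hj) x).deriv

lemma abs_iteratedDeriv_integral_mul_comp_sub_le (hk : Integrable k) (hf : ContDiff ℝ n f)
    (hM : ∀ j ≤ n, ∀ x, |iteratedDeriv j f x| ≤ M) {j : ℕ} (hj : j ≤ n) (x : ℝ) :
    |iteratedDeriv j (fun x => ∫ y, k y * f (x - y)) x| ≤ (∫ y, ‖k y‖) * M := by
  rw [iteratedDeriv_integral_mul_comp_sub hk hf hM hj, ← integral_mul_const]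
  exact norm_integral_le_of_norm_le (hk.norm.mul_const M)
    (.of_forall (norm_mul_comp_sub_le (hM j hj) x))

end Convolution

section ShortTimeControl

variable {w : ℝ → ℝ → ℝ} {N h t : ℝ}

namespace IsBurgersSolution

lemma comp_foot_eq (hw : IsBurgersSolution w (Icc 0 h)) (ht : t ∈ Icc 0 h) (x : ℝ) :
    w (foot t (fun x => w x t) x) 0 = w x t := by
  simpa only [foot, sub_zero] using hw.eq_foot x ht

lemma contDiff_three (hw : IsBurgersSolution w (Icc 0 h)) (h0 : ContDiff ℝ 3 fun x => w x 0)
    (ht : t ∈ Icc 0 h) : ContDiff ℝ 3 fun x => w x t :=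
  contDiff_of_comp_foot_eq (n := 2) h0 ((hw.contDiff t ht).differentiable one_ne_zero)
    (hw.comp_foot_eq ht)

lemma abs_iteratedDeriv_le (hw : IsBurgersSolution w (Icc 0 h))
    (h0 : ContDiff ℝ 3 fun x => w x 0)
    (hN : ∀ j ≤ 3, ∀ x, |iteratedDeriv j (fun x => w x 0) x| ≤ N) (hhN : h * N ≤ 1 / 11)
    (ht : t ∈ Icc 0 h) {j : ℕ} (hj : j ≤ 3) (x : ℝ) :
    |iteratedDeriv j (fun x => w x t) x| ≤ 2 * N := by
  have hN0 : 0 ≤ N := (abs_nonneg _).trans (hN 0 (by norm_num) 0)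
  exact abs_iteratedDeriv_le_two_mul h0 ((hw.contDiff t ht).differentiable one_ne_zero)
    (hw.comp_foot_eq ht) hN ht.1 ((mul_le_mul_of_nonneg_right ht.2 hN0).trans hhN) hj x

end IsBurgersSolution

theorem burgers_splitting_short_time_C3_general (hw : IsBurgersSolution w (Icc 0 h)) (hh : 0 ≤ h)
    (h0 : ContDiff ℝ 3 fun x => w x 0)
    (hN : ∀ j ≤ 3, ∀ x, |iteratedDeriv j (fun x => w x 0) x| ≤ N) (hhN : h * N ≤ 1 / 11) :
    (∀ t ∈ Icc 0 h, ContDiff ℝ 3 (fun x => w x t) ∧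
      ∀ j ≤ 3, ∀ x, |iteratedDeriv j (fun x => w x t) x| ≤ 2 * N) ∧
    ∀ α, 0 < α → α < 1 → ∀ t > 0, ∀ j ≤ 3, ∀ x,
      |iteratedDeriv j (fun x => ∫ y, fracHeatKernelT α t y * w (x - y) h) x| ≤ 2 * N := by
  refine ⟨fun t ht => ⟨hw.contDiff_three h0 ht, fun j hj x =>
    hw.abs_iteratedDeriv_le h0 hN hhN ht hj x⟩, fun α hα hα1 t ht j hj x => ?_⟩
  have hmem : h ∈ Icc 0 h := right_mem_Icc.2 hh
  have hN0 : 0 ≤ N := (abs_nonneg _).trans (hN 0 (by norm_num) 0)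
  calc |iteratedDeriv j (fun x => ∫ y, fracHeatKernelT α t y * w (x - y) h) x|
      ≤ (∫ y, ‖fracHeatKernelT α t y‖) * (2 * N) :=
        abs_iteratedDeriv_integral_mul_comp_sub_le (integrable_fracHeatKernelT hα hα1 ht)
          (hw.contDiff_three h0 hmem)
          (fun i hi => hw.abs_iteratedDeriv_le h0 hN hhN hmem hi) hj x
    _ ≤ 2 * N :=
        mul_le_of_le_one_left (by positivity) (integral_norm_fracHeatKernelT_le_one hα hα1 ht)

end ShortTimeControl

/-- **Short-time `C³` control for the inviscid Burgers equation (Lemma localforh).**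
There is an absolute `c > 0` such that if `‖θ₀‖_{C³} ≤ N` and `w` is a classical `C³`-in-`x`
solution of `∂_t w = w ∂_x w` with `w(·,0) = θ₀` on `[0,h]` with `h ≤ c/N`, then
`‖w(·,t)‖_{C³} ≤ 2N` for `0 ≤ t ≤ h`; consequently the dissipative step
`v(·,t) = Φ_t ∗ w(·,h)` also satisfies `‖v(·,t)‖_{C³} ≤ 2N` for `0 < t ≤ h`. -/
theorem burgers_splitting_short_time_C3 :
    ∃ c > (0:ℝ), ∀ (N h per : ℝ) (θ₀ : ℝ → ℝ) (w : ℝ → ℝ → ℝ),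
      0 < N → 0 < per → ContDiff ℝ (⊤ : ℕ∞) θ₀ → Function.Periodic θ₀ per →
      (∀ j ≤ 3, ∀ x, |iteratedDeriv j θ₀ x| ≤ N) →
      0 < h → h ≤ c / N →
      (∀ t ∈ Icc (0:ℝ) h, ContDiff ℝ 3 (fun x => w x t)) →
      (∀ x, w x 0 = θ₀ x) →
      (∀ x, ∀ t ∈ Icc (0:ℝ) h,
        HasDerivWithinAt (fun s => w x s)
          (w x t * deriv (fun x' => w x' t) x) (Icc 0 h) t) →
      (∀ t ∈ Icc (0:ℝ) h, ∀ j ≤ 3, ∀ x, |iteratedDeriv j (fun x' => w x' t) x| ≤ 2 * N) ∧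
      (∀ α : ℝ, 0 < α → α < 1 → ∀ t ∈ Ioc (0:ℝ) h, ∀ j ≤ 3, ∀ x,
        |iteratedDeriv j
          (fun x' => ∫ y : ℝ, fracHeatKernelT α t y * w (x' - y) h) x| ≤ 2 * N) := by
  refine ⟨1 / 11, by norm_num, fun N h _ θ₀ w hN _ hθ _ hb hh hhN hw h0 hderiv => ?_⟩
  obtain rfl : θ₀ = fun x => w x 0 := funext fun x => (h0 x).symm
  obtain ⟨htransport, hheat⟩ := burgers_splitting_short_time_C3_general
    ⟨fun t ht => (hw t ht).of_le (by norm_num), hderiv⟩ hh.le (contDiff_infty.1 hθ 3) hb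
    ((le_div_iff₀ hN).1 hhN)
  exact ⟨fun t ht => (htransport t ht).2, fun α hα hα1 t ht => hheat α hα hα1 t ht.1⟩

end
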